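/- arXiv:2210.14664 — 7 statements merged into one kernel-verified Lean document; each statement's English description precedes it below -/
import Mathlib

section
/- Let X' ∈ ℝ^{n×(d+1)} be a matrix of full column rank, with smallest singular value σ_min(X') > 0 and largest singular value σ_max(X'). Suppose the columns of X' are partitioned into T consecutive blocks M_1, …, M_T (each of full column rank), and for each j let U_j be a matrix whose columns form an orthonormal basis of the column space of M_j. Let U = [U_1, …, U_T] be the horizontal concatenation. Then for every vector w ∈ ℝ^{d+1}, ‖U w‖₂ ≥ (σ_min(X')/σ_max(X')) · ‖w‖₂; equivalently, the smallest singular value of U is at least σ_min(X')/σ_max(X'). -/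
/-- Euclidean norm of a finitely-indexed real vector. -/
noncomputable def euclNorm {ι : Type*} [Fintype ι] (v : ι → ℝ) : ℝ :=
  Real.sqrt (∑ i, v i ^ 2)

/-!
Write `U w = ∑ j, U_j w_j`. Each `U_j w_j` lies in the column space of `M_j`, say
`U_j w_j = M_j v_j`, so `U w = X' v`. Since `U_j` is an isometry, `‖w_j‖ = ‖M_j v_j‖ ≤ σmax ‖v_j‖`,
and summing the squares over `j` gives `‖w‖ ≤ σmax ‖v‖`. Hence
`‖U w‖ = ‖X' v‖ ≥ σmin ‖v‖ ≥ (σmin / σmax) ‖w‖`.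
-/

open Matrix WithLp
open scoped ENNReal

section PiLpNorm

variable {ι : Type*} {E F : ι → Type*} [Fintype ι] [∀ i, SeminormedAddCommGroup (E i)]
  [∀ i, SeminormedAddCommGroup (F i)] {p : ℝ≥0∞} [Fact (1 ≤ p)]

theorem piLp_norm_le_norm_of_forall_norm_le {x : PiLp p E} {y : PiLp p F}
    (h : ∀ i, ‖x i‖ ≤ ‖y i‖) : ‖x‖ ≤ ‖y‖ := by
  obtain rfl | hp := eq_or_ne p ∞
  · rw [PiLp.norm_eq_ciSup, PiLp.norm_eq_ciSup]
    exact ciSup_mono (Set.finite_range _).bddAbove h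
  · have hp_pos : 0 < p.toReal := ENNReal.toReal_pos (zero_lt_one.trans_le Fact.out).ne' hp
    rw [PiLp.norm_eq_sum hp_pos, PiLp.norm_eq_sum hp_pos]
    gcongr with i
    exact h i

theorem piLp_norm_le_mul_norm_of_forall_norm_le {C : ℝ} (hC : 0 ≤ C) {x : PiLp p E}
    {y : PiLp p F} (h : ∀ i, ‖x i‖ ≤ C * ‖y i‖) : ‖x‖ ≤ C * ‖y‖ := by
  let normY : PiLp p fun _ : ι => ℝ := toLp p fun i => ‖y i‖
  calc
    ‖x‖ ≤ ‖C • normY‖ :=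
      piLp_norm_le_norm_of_forall_norm_le fun i => by simpa [normY, abs_of_nonneg hC] using h i
    _ = C * ‖normY‖ := by rw [norm_smul, Real.norm_of_nonneg hC]
    _ ≤ C * ‖y‖ := by
      gcongr
      exact piLp_norm_le_norm_of_forall_norm_le fun i => (norm_norm (y i)).le

variable {κ : ι → Type*} [∀ j, Fintype (κ j)] {G : Type*} [SeminormedAddCommGroup G]

theorem norm_toLp_curry (v : (Σ j, κ j) → G) :
    ‖toLp p fun j => toLp p fun c => v ⟨j, c⟩‖ = ‖toLp p v‖ :=
  (LinearIsometryEquiv.piLpCurry ℤ p fun j (_ : κ j) => G).norm_map (toLp p v)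

theorem norm_toLp_uncurry_single [DecidableEq ι] (j : ι) (a : κ j → G) :
    ‖toLp p fun k : Σ j, κ j => (Pi.single j a : ∀ j, κ j → G) k.1 k.2‖ = ‖toLp p a‖ := by
  rw [← norm_toLp_curry, ← PiLp.norm_single p (fun j => PiLp p fun _ : κ j => G) j (toLp p a)]
  congr with k c
  obtain rfl | hk := eq_or_ne k j
  · simp
  · simp [hk]

end PiLpNorm

section ColBlock

variable {m ι R : Type*} {κ : ι → Type*}

/-- The `j`-th block `M_j` of a matrix `M = [M_1, …, M_T]` whose columns are partitioned into
consecutive blocks; the column `c` of the block `M_j` has index `⟨j, c⟩` in `M`. -/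
def colBlock (M : Matrix m (Σ j, κ j) R) (j : ι) : Matrix m (κ j) R :=
  M.submatrix id (Sigma.mk j)

theorem mulVec_eq_sum_colBlock_mulVec [Fintype ι] [∀ j, Fintype (κ j)]
    [NonUnitalNonAssocSemiring R] (M : Matrix m (Σ j, κ j) R) (v : (Σ j, κ j) → R) :
    M *ᵥ v = ∑ j, colBlock M j *ᵥ fun c => v ⟨j, c⟩ := by
  ext i
  simp [mulVec, dotProduct, Fintype.sum_sigma, colBlock]

theorem colBlock_mulVec_eq_mulVec_uncurry_single [Fintype ι] [DecidableEq ι] [∀ j, Fintype (κ j)]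
    [NonUnitalNonAssocSemiring R] (M : Matrix m (Σ j, κ j) R) (j : ι) (a : κ j → R) :
    colBlock M j *ᵥ a = M *ᵥ fun k => (Pi.single j a : ∀ j, κ j → R) k.1 k.2 := by
  rw [mulVec_eq_sum_colBlock_mulVec, Fintype.sum_eq_single j]
  · simp only [Pi.single_eq_same]
  · intro k hk
    simp only [Pi.single_eq_of_ne hk, Pi.zero_apply]
    exact mulVec_zero _

theorem norm_toLp_colBlock_mulVec_le [Fintype m] [Fintype ι] [∀ j, Fintype (κ j)]
    [NonUnitalSeminormedRing R] {p q : ℝ≥0∞} [Fact (1 ≤ p)] {M : Matrix m (Σ j, κ j) R} {C : ℝ}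
    (hM : ∀ v, ‖toLp q (M *ᵥ v)‖ ≤ C * ‖toLp p v‖) (j : ι) (a : κ j → R) :
    ‖toLp q (colBlock M j *ᵥ a)‖ ≤ C * ‖toLp p a‖ := by
  classical
  rw [colBlock_mulVec_eq_mulVec_uncurry_single, ← norm_toLp_uncurry_single]
  exact hM _

end ColBlock

section MulVec

variable {𝕜 m n n' : Type*} [Fintype n]

theorem norm_toLp_mulVec_of_conjTranspose_mul_self_eq_one [RCLike 𝕜] [Fintype m] [DecidableEq n]
    {A : Matrix m n 𝕜} (hA : Aᴴ * A = 1) (v : n → 𝕜) : ‖toLp 2 (A *ᵥ v)‖ = ‖toLp 2 v‖ := by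
  have inner_mulVec_self :
      inner 𝕜 (toLp 2 (A *ᵥ v)) (toLp 2 (A *ᵥ v)) = inner 𝕜 (toLp 2 v) (toLp 2 v) := by
    simp only [EuclideanSpace.inner_toLp_toLp]
    rw [dotProduct_comm, star_mulVec, ← dotProduct_mulVec, mulVec_mulVec, hA, one_mulVec,
      dotProduct_comm]
  rw [@norm_eq_sqrt_re_inner 𝕜, @norm_eq_sqrt_re_inner 𝕜 _ _ _ _ (toLp 2 v), inner_mulVec_self]

theorem exists_mulVec_eq_mulVec_of_span_col_le [Fintype n'] [CommSemiring 𝕜] {A : Matrix m n 𝕜}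
    {B : Matrix m n' 𝕜}
    (h : Submodule.span 𝕜 (Set.range A.col) ≤ Submodule.span 𝕜 (Set.range B.col)) (v : n → 𝕜) :
    ∃ a, B *ᵥ a = A *ᵥ v := by
  rw [← range_mulVecLin, ← range_mulVecLin] at h
  exact h ⟨v, rfl⟩

end MulVec

theorem smallest_singular_value_of_concatenated_bases_general {𝕜 m ι : Type*} {κ κ' : ι → Type*}
    [RCLike 𝕜] [Fintype m] [Fintype ι] [∀ j, Fintype (κ j)] [∀ j, Fintype (κ' j)]
    [∀ j, DecidableEq (κ' j)] {X : Matrix m (Σ j, κ j) 𝕜} {U : Matrix m (Σ j, κ' j) 𝕜}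
    {σmin σmax : ℝ} (hσmin : 0 ≤ σmin)
    (hmin : ∀ v, σmin * ‖toLp 2 v‖ ≤ ‖toLp 2 (X *ᵥ v)‖)
    (hmax : ∀ j a, ‖toLp 2 (colBlock X j *ᵥ a)‖ ≤ σmax * ‖toLp 2 a‖)
    (horth : ∀ j, (colBlock U j)ᴴ * colBlock U j = 1)
    (hspan : ∀ j, Submodule.span 𝕜 (Set.range (colBlock U j).col) ≤
      Submodule.span 𝕜 (Set.range (colBlock X j).col))
    (w : (Σ j, κ' j) → 𝕜) : σmin / σmax * ‖toLp 2 w‖ ≤ ‖toLp 2 (U *ᵥ w)‖ := by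
  obtain hσmax | hσmax := le_or_gt σmax 0
  · exact (mul_nonpos_of_nonpos_of_nonneg (div_nonpos_of_nonneg_of_nonpos hσmin hσmax)
      (norm_nonneg _)).trans (norm_nonneg _)
  choose v hv using fun j =>
    exists_mulVec_eq_mulVec_of_span_col_le (hspan j) fun c => w ⟨j, c⟩
  let vConcat : (Σ j, κ j) → 𝕜 := fun k => v k.1 k.2
  have hXU : X *ᵥ vConcat = U *ᵥ w := by
    simp only [mulVec_eq_sum_colBlock_mulVec, vConcat, hv]
  have hblock (j : ι) : ‖toLp 2 fun c => w ⟨j, c⟩‖ ≤ σmax * ‖toLp 2 (v j)‖ := by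
    rw [← norm_toLp_mulVec_of_conjTranspose_mul_self_eq_one (horth j), ← hv]
    exact hmax j (v j)
  have hwv : ‖toLp 2 w‖ ≤ σmax * ‖toLp 2 vConcat‖ := by
    rw [← norm_toLp_curry, ← norm_toLp_curry]
    exact piLp_norm_le_mul_norm_of_forall_norm_le hσmax.le hblock
  calc
    σmin / σmax * ‖toLp 2 w‖ ≤ σmin / σmax * (σmax * ‖toLp 2 vConcat‖) := by gcongr
    _ = σmin * ‖toLp 2 vConcat‖ := by field_simp
    _ ≤ ‖toLp 2 (X *ᵥ vConcat)‖ := hmin _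
    _ = ‖toLp 2 (U *ᵥ w)‖ := by rw [hXU]

theorem euclNorm_eq_norm_toLp {ι : Type*} [Fintype ι] (v : ι → ℝ) : euclNorm v = ‖toLp 2 v‖ := by
  simp [euclNorm, EuclideanSpace.norm_eq]

/-- If `X'` has smallest singular value `σmin > 0` and largest singular value
`σmax`, its columns are partitioned into `T` blocks, and `U` is the horizontal concatenation
of orthonormal bases `U_j` of the column spaces of the blocks, then
`‖U w‖₂ ≥ (σmin/σmax) ‖w‖₂` for all `w`. -/
theorem smallest_singular_value_of_concatenated_bases
    (n T : ℕ) (dj : Fin T → ℕ)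
    (X' U : Matrix (Fin n) ((j : Fin T) × Fin (dj j)) ℝ)
    (σmin σmax : ℝ) (hσmin : 0 < σmin)
    (hmin : ∀ v : ((j : Fin T) × Fin (dj j)) → ℝ,
      σmin * euclNorm v ≤ euclNorm (X'.mulVec v))
    (hmax : ∀ v : ((j : Fin T) × Fin (dj j)) → ℝ,
      euclNorm (X'.mulVec v) ≤ σmax * euclNorm v)
    -- each `U_j` has orthonormal columns
    (horth : ∀ (j : Fin T) (c c' : Fin (dj j)),
      (∑ i, U i ⟨j, c⟩ * U i ⟨j, c'⟩) = if c = c' then 1 else 0)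
    -- the columns of `U_j` form a basis of the column space of the `j`-th block of `X'`
    (hspan : ∀ j : Fin T,
      Submodule.span ℝ (Set.range fun c : Fin (dj j) => fun i => U i ⟨j, c⟩) =
      Submodule.span ℝ (Set.range fun c : Fin (dj j) => fun i => X' i ⟨j, c⟩)) :
    ∀ w : ((j : Fin T) × Fin (dj j)) → ℝ,
      (σmin / σmax) * euclNorm w ≤ euclNorm (U.mulVec w) := by
  simp only [euclNorm_eq_norm_toLp] at hmin hmax ⊢
  exact smallest_singular_value_of_concatenated_bases_general hσmin.le hmin
    (norm_toLp_colBlock_mulVec_le hmax) (fun j => Matrix.ext (horth j)) fun j => (hspan j).le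
end

section
/- Let ξ be a random vector in ℝ^m whose coordinates are independent and each distributed as a centered Gaussian N(0, σ²), and let μ ∈ ℝ^m be any fixed vector. Then for every t ≥ 0, Pr( ‖μ + ξ‖₂² ≥ t ) ≥ Pr( ‖ξ‖₂² ≥ t ). That is, the noncentral chi-square random variable ‖μ + ξ‖₂² stochastically dominates the central one ‖ξ‖₂². -/
open MeasureTheory ProbabilityTheory

/-!
The density of `ξ` with respect to Lebesgue measure decreases with `‖x‖₂`. Among all sets of a given
volume, a superlevel set of a density carries the most mass, and the open ball `{‖x‖₂² < t}` is such
a set. Its translate `{‖μ + x‖₂² < t}` has the same volume, hence no more mass; pass to complements.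
-/

open scoped ENNReal NNReal

section Bathtub

variable {α : Type*} [MeasurableSpace α] {μ : Measure α} {s t : Set α} {f : α → ℝ≥0∞}

lemma measure_sdiff_le_measure_sdiff_of_measure_le (hs : MeasurableSet s) (ht : MeasurableSet t)
    (hts : μ t ≤ μ s) (hfin : μ (s ∩ t) ≠ ∞) : μ (t \ s) ≤ μ (s \ t) := by
  rw [← measure_inter_add_sdiff t hs, ← measure_inter_add_sdiff s ht, Set.inter_comm t s] at hts
  exact (ENNReal.add_le_add_iff_left hfin).1 hts

theorem setLIntegral_le_of_measure_le_of_forall_notMem_le (hs : MeasurableSet s)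
    (ht : MeasurableSet t) (hts : μ t ≤ μ s) (hfin : μ (s ∩ t) ≠ ∞)
    (hf : ∀ x ∈ s, ∀ y ∉ s, f y ≤ f x) :
    ∫⁻ x in t, f x ∂μ ≤ ∫⁻ x in s, f x ∂μ := by
  let c : ℝ≥0∞ := ⨆ y ∈ sᶜ, f y
  have f_le_c : ∀ y ∉ s, f y ≤ c := fun y hy => le_iSup₂ (f := fun y (_ : y ∈ sᶜ) => f y) y hy
  have c_le_f : ∀ x ∈ s, c ≤ f x := fun x hx => iSup₂_le (hf x hx)
  have hsdiff : ∫⁻ x in t \ s, f x ∂μ ≤ ∫⁻ x in s \ t, f x ∂μ := calc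
    ∫⁻ x in t \ s, f x ∂μ ≤ ∫⁻ _ in t \ s, c ∂μ :=
      setLIntegral_mono' (ht.diff hs) fun x hx => f_le_c x hx.2
    _ = c * μ (t \ s) := setLIntegral_const _ _
    _ ≤ c * μ (s \ t) := by
      gcongr c * ?_
      exact measure_sdiff_le_measure_sdiff_of_measure_le hs ht hts hfin
    _ = ∫⁻ _ in s \ t, c ∂μ := (setLIntegral_const _ _).symm
    _ ≤ ∫⁻ x in s \ t, f x ∂μ :=
      setLIntegral_mono' (hs.diff ht) fun x hx => c_le_f x hx.1
  rw [← lintegral_inter_add_sdiff f t hs, ← lintegral_inter_add_sdiff f s ht, Set.inter_comm t s]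
  gcongr

end Bathtub

section Translation

variable {G : Type*} [MeasurableSpace G] [AddGroup G] [MeasurableAdd G] {ν : Measure G}
  [ν.IsAddLeftInvariant] {β : Type*} [LinearOrder β] [TopologicalSpace β] [ClosedIciTopology β]
  [MeasurableSpace β] [OpensMeasurableSpace β] {f : G → ℝ≥0∞} {q : G → β} {r : β}

theorem withDensity_setOf_add_lt_le_of_antivary (hq : Measurable q) (hfq : Antivary f q)
    (hfin : ν {x | q x < r} ≠ ∞) (a : G) :
    ν.withDensity f {x | q (a + x) < r} ≤ ν.withDensity f {x | q x < r} := by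
  have hsublevel : MeasurableSet {x | q x < r} := hq measurableSet_Iio
  have hshift : MeasurableSet {x | q (a + x) < r} := hsublevel.preimage (measurable_const_add a)
  have hvol : ν {x | q (a + x) < r} = ν {x | q x < r} :=
    measure_preimage_add ν a {x | q x < r}
  rw [withDensity_apply _ hsublevel, withDensity_apply _ hshift]
  exact setLIntegral_le_of_measure_le_of_forall_notMem_le hsublevel hshift hvol.le
    (measure_ne_top_of_subset Set.inter_subset_left hfin)
    fun x hx y hy => hfq (lt_of_lt_of_le hx (not_lt.1 hy))

theorem withDensity_setOf_le_le_add_of_antivary [IsFiniteMeasure (ν.withDensity f)]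
    (hq : Measurable q) (hfq : Antivary f q) (hfin : ν {x | q x < r} ≠ ∞) (a : G) :
    ν.withDensity f {x | r ≤ q x} ≤ ν.withDensity f {x | r ≤ q (a + x)} := by
  have hsublevel : MeasurableSet {x | q x < r} := hq measurableSet_Iio
  have hshift : MeasurableSet {x | q (a + x) < r} := hsublevel.preimage (measurable_const_add a)
  have compl_sublevel : {x | r ≤ q x} = {x | q x < r}ᶜ := by ext x; simp
  have compl_shift : {x | r ≤ q (a + x)} = {x | q (a + x) < r}ᶜ := by ext x; simp
  rw [compl_sublevel, compl_shift, measure_compl hsublevel (measure_ne_top _ _),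
    measure_compl hshift (measure_ne_top _ _)]
  exact tsub_le_tsub_left (withDensity_setOf_add_lt_le_of_antivary hq hfq hfin a) _

end Translation

section Product

variable {ι : Type*} {X : ι → Type*} [∀ i, MeasurableSpace (X i)] {μ : ∀ i, Measure (X i)}
  [∀ i, SigmaFinite (μ i)] {f : ∀ i, X i → ℝ≥0∞}

lemma lmarginal_prod_eq_prod_lintegral [DecidableEq ι] (hf : ∀ i, Measurable (f i))
    (s : Finset ι) (x : ∀ i, X i) :
    lmarginal μ s (fun y => ∏ i ∈ s, f i (y i)) x = ∏ i ∈ s, ∫⁻ y, f i y ∂μ i := by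
  induction s using Finset.induction with
  | empty => simp
  | insert i s hi ih =>
    have integrate_coordinate (y : ∀ i, X i) :
        ∫⁻ z, ∏ j ∈ insert i s, f j (Function.update y i z j) ∂μ i =
          (∫⁻ z, f i z ∂μ i) * ∏ j ∈ s, f j (y j) := by
      rw [← lintegral_mul_const _ (hf i)]
      refine lintegral_congr fun z => ?_
      rw [Finset.prod_insert hi, Function.update_self]
      congr 1
      refine Finset.prod_congr rfl fun j hj => ?_
      rw [Function.update_of_ne (ne_of_mem_of_not_mem hj hi)]
    rw [lmarginal_insert' _ (by fun_prop) hi, Finset.prod_insert hi, ← ih]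
    simp only [integrate_coordinate]
    exact lintegral_const_mul _ (by fun_prop)

variable [Fintype ι]

theorem lintegral_pi_prod_eq_prod_lintegral (hf : ∀ i, Measurable (f i)) :
    ∫⁻ x, ∏ i, f i (x i) ∂Measure.pi μ = ∏ i, ∫⁻ y, f i y ∂μ i := by
  classical
  rcases isEmpty_or_nonempty (∀ i, X i) with hempty | ⟨⟨x⟩⟩
  · obtain ⟨i, hi⟩ := isEmpty_pi.1 hempty
    rw [lintegral_of_isEmpty, Finset.prod_eq_zero (Finset.mem_univ i) (lintegral_of_isEmpty _ _)]
  · rw [lintegral_eq_lmarginal_univ x, lmarginal_prod_eq_prod_lintegral hf]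

theorem pi_withDensity_eq_withDensity_prod [∀ i, SigmaFinite ((μ i).withDensity (f i))]
    (hf : ∀ i, Measurable (f i)) :
    Measure.pi (fun i => (μ i).withDensity (f i)) =
      (Measure.pi μ).withDensity fun x => ∏ i, f i (x i) := by
  refine Measure.pi_eq fun s hs => ?_
  have indicator_pi (x : ∀ i, X i) :
      (Set.univ.pi s).indicator (fun x => ∏ i, f i (x i)) x =
        ∏ i, (s i).indicator (f i) (x i) := by
    by_cases hx : x ∈ Set.univ.pi s
    · rw [Set.indicator_of_mem hx]
      exact Finset.prod_congr rfl fun i _ => (Set.indicator_of_mem (hx i trivial) _).symm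
    · obtain ⟨i, hi⟩ : ∃ i, x i ∉ s i := by simpa [Set.mem_univ_pi] using hx
      rw [Set.indicator_of_notMem hx,
        Finset.prod_eq_zero (Finset.mem_univ i) (Set.indicator_of_notMem hi _)]
  calc (Measure.pi μ).withDensity (fun x => ∏ i, f i (x i)) (Set.univ.pi s)
      = ∫⁻ x, ∏ i, (s i).indicator (f i) (x i) ∂Measure.pi μ := by
        rw [withDensity_apply _ (.univ_pi hs), ← lintegral_indicator (.univ_pi hs)]
        exact lintegral_congr indicator_pi
    _ = ∏ i, ∫⁻ y, (s i).indicator (f i) y ∂μ i :=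
        lintegral_pi_prod_eq_prod_lintegral fun i => (hf i).indicator (hs i)
    _ = ∏ i, (μ i).withDensity (f i) (s i) := by
        simp only [lintegral_indicator (hs _), withDensity_apply _ (hs _)]

end Product

section Gaussian

variable {ι : Type*} [Fintype ι]

lemma pi_gaussianReal_eq_withDensity (m : ι → ℝ) {v : ι → ℝ≥0} (hv : ∀ i, v i ≠ 0) :
    Measure.pi (fun i => gaussianReal (m i) (v i)) =
      volume.withDensity fun x : ι → ℝ => ∏ i, gaussianPDF (m i) (v i) (x i) := by
  have hdensity (i : ι) := gaussianReal_of_var_ne_zero (m i) (hv i)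
  have (i : ι) : SigmaFinite (volume.withDensity (gaussianPDF (m i) (v i))) :=
    hdensity i ▸ inferInstance
  simp only [hdensity]
  exact pi_withDensity_eq_withDensity_prod fun i => measurable_gaussianPDF (m i) (v i)

lemma prod_gaussianPDF_zero (v : ℝ≥0) (x : ι → ℝ) :
    ∏ i, gaussianPDF 0 v (x i) =
      ENNReal.ofReal ((√(2 * Real.pi * v))⁻¹ ^ Fintype.card ι *
        Real.exp (-(∑ i, x i ^ 2) / (2 * v))) := by
  simp only [gaussianPDF]
  rw [← ENNReal.ofReal_prod_of_nonneg fun i _ => gaussianPDFReal_nonneg 0 v (x i)]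
  simp only [gaussianPDFReal, sub_zero, Finset.prod_mul_distrib, Finset.prod_const,
    Finset.card_univ, ← Real.exp_sum, ← Finset.sum_div, Finset.sum_neg_distrib]

lemma antivary_prod_gaussianPDF_zero (v : ℝ≥0) :
    Antivary (fun x : ι → ℝ => ∏ i, gaussianPDF 0 v (x i)) (fun x => ∑ i, x i ^ 2) := by
  intro x y hxy
  simp only [prod_gaussianPDF_zero]
  gcongr

lemma volume_setOf_sum_sq_lt_ne_top (r : ℝ) :
    volume {x : ι → ℝ | ∑ i, x i ^ 2 < r} ≠ ∞ := by
  have hsubset : {x : ι → ℝ | ∑ i, x i ^ 2 < r} ⊆ Metric.closedBall 0 √r := by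
    intro x hx
    rw [mem_closedBall_zero_iff, pi_norm_le_iff_of_nonneg (Real.sqrt_nonneg r)]
    intro i
    have hcoord : x i ^ 2 ≤ ∑ j, x j ^ 2 :=
      Finset.single_le_sum (fun j _ => sq_nonneg (x j)) (Finset.mem_univ i)
    exact Real.abs_le_sqrt (hcoord.trans hx.le)
  exact measure_ne_top_of_subset hsubset measure_closedBall_lt_top.ne

end Gaussian

/-- the noncentral chi-square `‖μ + ξ‖₂²` stochastically dominates the central
one `‖ξ‖₂²`, where `ξ` has i.i.d. `N(0, σ²)` coordinates: for every `t ≥ 0`,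
`Pr(‖μ + ξ‖₂² ≥ t) ≥ Pr(‖ξ‖₂² ≥ t)`. -/
theorem noncentral_chisq_stochastically_dominates
    (m : ℕ) (σ : ℝ) (hσ : 0 < σ) (μ : Fin m → ℝ) (t : ℝ) (ht : 0 ≤ t) :
    (Measure.pi fun _ : Fin m => gaussianReal 0 (σ ^ 2).toNNReal)
        {x : Fin m → ℝ | t ≤ ∑ i, x i ^ 2}
      ≤ (Measure.pi fun _ : Fin m => gaussianReal 0 (σ ^ 2).toNNReal)
        {x : Fin m → ℝ | t ≤ ∑ i, (μ i + x i) ^ 2} := by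
  have hv : (σ ^ 2).toNNReal ≠ 0 := (Real.toNNReal_pos.2 (pow_pos hσ 2)).ne'
  have hdensity := pi_gaussianReal_eq_withDensity (fun _ : Fin m => 0) fun _ => hv
  have : IsFiniteMeasure (volume.withDensity fun x : Fin m → ℝ =>
      ∏ i, gaussianPDF 0 (σ ^ 2).toNNReal (x i)) := hdensity ▸ inferInstance
  rw [hdensity]
  exact withDensity_setOf_le_le_add_of_antivary (by fun_prop)
    (antivary_prod_gaussianPDF_zero _) (volume_setOf_sum_sq_lt_ne_top t) μ
end

section
/- There exist absolute constants C₀ > 0 and C₁ > 0 such that the following holds. Let n ≥ 2, B > 0, r > 0, and let x_1, …, x_n ∈ ℝ^d satisfy ‖x_i‖₂ ≤ B for all i. Suppose the d coordinates are partitioned into T blocks of sizes d_1, …, d_T, and let t be a block with d_t = max_j d_j ≥ C₀ (log n)². Let ξ_1, …, ξ_n be independent random vectors in ℝ^d whose coordinates are independent centered Gaussians N(0, r²B²), and set x̃_i = x_i + ξ_i; write x̃_i^{(t)} ∈ ℝ^{d_t} for the restriction of x̃_i to the coordinates of block t. Then with probability at least 1 − 4/n², for all i ≠ j: ‖x̃_i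 − x̃_j‖₂² ≤ C₁ · (1/r² + d/(log n)²) · ‖x̃_i^{(t)} − x̃_j^{(t)}‖₂². -/
open MeasureTheory ProbabilityTheory

/-!
For `i ≠ j` the coordinates of `x̃ᵢ - x̃ⱼ` are independent Gaussians with means `xᵢ - xⱼ` and
variance `w = 2 r² B²`. The moment generating function of a squared Gaussian is explicit, so
Chernoff bounds with the tilts `1 / (4 w)` and `-2 / w` give, each up to probability
`exp (-dₜ / 2)`, that the full squared norm is at most `2 ‖xᵢ - xⱼ‖² + 4 w d` and that the squared
norm over a block of size `dₜ` is at least `w dₜ / 8`. As `‖xᵢ - xⱼ‖² ≤ 4 B²` and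
`dₜ ≥ 16 (log n)² ≥ 8 log n`, the quotient of the two is at most `8 (1 / r² + d / (log n)²)`, each
pair fails with probability at most `2 / n⁴`, and a union bound over the pairs concludes.
-/

open Finset Real
open scoped NNReal

section GaussianSquare

lemma gaussianPDFReal_mul_exp_mul_sq (μ : ℝ) {v w : ℝ≥0} {t : ℝ} (hv : v ≠ 0) (ht : 2 * t * v < 1)
    (hw : (w : ℝ) = v / (1 - 2 * t * v)) (x : ℝ) :
    gaussianPDFReal μ v x * exp (t * x ^ 2) =
      (√(1 - 2 * t * v))⁻¹ * exp (t * μ ^ 2 / (1 - 2 * t * v)) *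
        gaussianPDFReal (μ / (1 - 2 * t * v)) w x := by
  have hq : 0 < 1 - 2 * t * v := by linarith
  have hq' : 1 - 2 * v * t ≠ 0 := by linarith
  have hnormalization : (√(2 * π * v))⁻¹ = (√(1 - 2 * t * v))⁻¹ * (√(2 * π * w))⁻¹ := by
    rw [← mul_inv, ← sqrt_mul hq.le, hw]
    congr 2
    field_simp
  have hexponent : -(x - μ) ^ 2 / (2 * v) + t * x ^ 2 =
      t * μ ^ 2 / (1 - 2 * t * v) + -(x - μ / (1 - 2 * t * v)) ^ 2 / (2 * w) := by
    rw [hw]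
    field_simp
    ring
  rw [gaussianPDFReal_def, gaussianPDFReal_def]
  calc (√(2 * π * v))⁻¹ * exp (-(x - μ) ^ 2 / (2 * v)) * exp (t * x ^ 2)
      = (√(2 * π * v))⁻¹ * exp (-(x - μ) ^ 2 / (2 * v) + t * x ^ 2) := by rw [exp_add, mul_assoc]
    _ = _ := by rw [hnormalization, hexponent, exp_add]; ring

lemma mgf_sq_gaussianReal (μ : ℝ) {v : ℝ≥0} {t : ℝ} (ht : 2 * t * v < 1) :
    mgf (fun x ↦ x ^ 2) (gaussianReal μ v) t =
      (√(1 - 2 * t * v))⁻¹ * exp (t * μ ^ 2 / (1 - 2 * t * v)) := by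
  rcases eq_or_ne v 0 with rfl | hv
  · simp [mgf]
  have hq : 0 < 1 - 2 * t * v := by linarith
  let w : ℝ≥0 := ⟨v / (1 - 2 * t * v), by positivity⟩
  have hw : w ≠ 0 := by
    rw [← NNReal.coe_ne_zero]
    exact div_ne_zero (by simpa using hv) hq.ne'
  simp_rw [mgf, integral_gaussianReal_eq_integral_smul hv, smul_eq_mul,
    gaussianPDFReal_mul_exp_mul_sq μ hv ht (w := w) rfl]
  rw [integral_const_mul, integral_gaussianPDFReal_eq_one _ hw, mul_one]

end GaussianSquare

section NoncentralChiSquare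

variable {Ω ι : Type*} [MeasurableSpace Ω] {P : Measure Ω} {X : ι → Ω → ℝ} {b : ι → ℝ} {v : ℝ≥0}

lemma mgf_sum_sq_of_iIndepFun_gaussianReal (hX : iIndepFun X P)
    (hlaw : ∀ i, HasLaw (X i) (gaussianReal (b i) v) P) (s : Finset ι) {t : ℝ}
    (ht : 2 * t * v < 1) :
    mgf (fun ω ↦ ∑ i ∈ s, X i ω ^ 2) P t =
      (√(1 - 2 * t * v))⁻¹ ^ #s * exp (t * (∑ i ∈ s, b i ^ 2) / (1 - 2 * t * v)) := by
  have hmgf (i : ι) : mgf (fun ω ↦ X i ω ^ 2) P t =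
      (√(1 - 2 * t * v))⁻¹ * exp (t * b i ^ 2 / (1 - 2 * t * v)) := by
    rw [← mgf_sq_gaussianReal (b i) ht, ← (hlaw i).map_eq,
      mgf_map (hlaw i).aemeasurable (by fun_prop)]
    rfl
  have hindep : iIndepFun (fun i ω ↦ X i ω ^ 2) P := hX.comp (fun _ x ↦ x ^ 2) (by fun_prop)
  have hsum : (fun ω ↦ ∑ i ∈ s, X i ω ^ 2) = ∑ i ∈ s, fun ω ↦ X i ω ^ 2 := by
    ext ω
    simp
  rw [hsum, hindep.mgf_sum₀ (fun i ↦ (hlaw i).aemeasurable.pow_const 2)]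
  simp_rw [hmgf, prod_mul_distrib, prod_const, ← exp_sum, ← sum_div, ← mul_sum]

lemma integrable_exp_mul_sum_sq_of_iIndepFun_gaussianReal (hX : iIndepFun X P)
    (hlaw : ∀ i, HasLaw (X i) (gaussianReal (b i) v) P) (s : Finset ι) {t : ℝ}
    (ht : 2 * t * v < 1) :
    Integrable (fun ω ↦ exp (t * ∑ i ∈ s, X i ω ^ 2)) P := by
  have := hX.isProbabilityMeasure
  have : 0 < 1 - 2 * t * v := by linarith
  refine mgf_pos_iff.1 ?_
  rw [mgf_sum_sq_of_iIndepFun_gaussianReal hX hlaw s ht]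
  positivity

lemma measureReal_le_sum_sq_le_exp_neg (hX : iIndepFun X P)
    (hlaw : ∀ i, HasLaw (X i) (gaussianReal (b i) v) P) (hv : v ≠ 0) (s : Finset ι) (u : ℝ) :
    P.real {ω | 2 * ∑ i ∈ s, b i ^ 2 + 2 * v * #s + 4 * v * u ≤ ∑ i ∈ s, X i ω ^ 2} ≤
      exp (-u) := by
  have := hX.isProbabilityMeasure
  have htilt : 1 - 2 * (1 / (4 * v)) * (v : ℝ) = 1 / 2 := by field_simp; norm_num
  have ht : 2 * (1 / (4 * v)) * (v : ℝ) < 1 := by linarith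
  have hfactor : (√(1 / 2))⁻¹ ≤ exp (1 / 2) := by
    rw [← sqrt_inv, exp_half]
    exact sqrt_le_sqrt (by linarith [add_one_le_exp (1 : ℝ)])
  set S := ∑ i ∈ s, b i ^ 2
  calc P.real {ω | 2 * S + 2 * v * #s + 4 * v * u ≤ ∑ i ∈ s, X i ω ^ 2}
      ≤ exp (-(1 / (4 * v)) * (2 * S + 2 * v * #s + 4 * v * u)) *
          mgf (fun ω ↦ ∑ i ∈ s, X i ω ^ 2) P (1 / (4 * v)) :=
        measure_ge_le_exp_mul_mgf _ (by positivity)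
          (integrable_exp_mul_sum_sq_of_iIndepFun_gaussianReal hX hlaw s ht)
    _ = exp (-(1 / (4 * v)) * (2 * S + 2 * v * #s + 4 * v * u)) *
          ((√(1 / 2))⁻¹ ^ #s * exp (1 / (4 * v) * S / (1 / 2))) := by
        rw [mgf_sum_sq_of_iIndepFun_gaussianReal hX hlaw s ht, htilt]
    _ ≤ exp (-(1 / (4 * v)) * (2 * S + 2 * v * #s + 4 * v * u)) *
          (exp (1 / 2) ^ #s * exp (1 / (4 * v) * S / (1 / 2))) := by gcongr
    _ = exp (-u) := by
        rw [← exp_nat_mul, ← exp_add, ← exp_add]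
        congr 1
        field_simp
        ring

lemma measureReal_sum_sq_le_le_exp_neg (hX : iIndepFun X P)
    (hlaw : ∀ i, HasLaw (X i) (gaussianReal (b i) v) P) (hv : v ≠ 0) (s : Finset ι) :
    P.real {ω | ∑ i ∈ s, X i ω ^ 2 ≤ v * #s / 8} ≤ exp (-(#s / 2)) := by
  have := hX.isProbabilityMeasure
  have hv' : (0 : ℝ) < v := by positivity
  have htilt : 1 - 2 * (-2 / v) * (v : ℝ) = 5 := by field_simp; norm_num
  have ht : 2 * (-2 / v) * (v : ℝ) < 1 := by linarith
  -- The surplus over `exp (-(1 / 2))` pays for the factor `exp (#s / 4)` of the Chernoff bound.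
  have hfactor : (√5)⁻¹ ≤ exp (-(3 / 4)) := by
    rw [exp_neg]
    refine inv_anti₀ (exp_pos _) (le_sqrt_of_sq_le ?_)
    have hexp : (exp (3 / 4) ^ 2) ^ 2 = exp 1 ^ 3 := by
      simp_rw [← exp_nat_mul]
      norm_num
    have he : exp 1 ^ 3 ≤ 2.7182818286 ^ 3 := by gcongr; exact exp_one_lt_d9.le
    exact le_of_sq_le_sq (by rw [hexp]; norm_num at he ⊢; linarith) (by norm_num)
  have ht0 : -2 / (v : ℝ) ≤ 0 := div_nonpos_of_nonpos_of_nonneg (by norm_num) hv'.le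
  have hmean : exp (-2 / v * (∑ i ∈ s, b i ^ 2) / 5) ≤ 1 :=
    exp_le_one_iff.2 (div_nonpos_of_nonpos_of_nonneg
      (mul_nonpos_of_nonpos_of_nonneg ht0 (by positivity)) (by norm_num))
  calc P.real {ω | ∑ i ∈ s, X i ω ^ 2 ≤ v * #s / 8}
      ≤ exp (-(-2 / v) * (v * #s / 8)) * mgf (fun ω ↦ ∑ i ∈ s, X i ω ^ 2) P (-2 / v) :=
        measure_le_le_exp_mul_mgf _ ht0
          (integrable_exp_mul_sum_sq_of_iIndepFun_gaussianReal hX hlaw s ht)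
    _ = exp (-(-2 / v) * (v * #s / 8)) *
          ((√5)⁻¹ ^ #s * exp (-2 / v * (∑ i ∈ s, b i ^ 2) / 5)) := by
        rw [mgf_sum_sq_of_iIndepFun_gaussianReal hX hlaw s ht, htilt]
    _ ≤ exp (-(-2 / v) * (v * #s / 8)) * (exp (-(3 / 4)) ^ #s * 1) := by gcongr
    _ = exp (-(#s / 2)) := by
        rw [mul_one, ← exp_nat_mul, ← exp_add]
        congr 1
        field_simp
        ring

lemma measureReal_sum_sq_gt_mul_sum_sq_le [Fintype ι] (hX : iIndepFun X P)
    (hlaw : ∀ i, HasLaw (X i) (gaussianReal (b i) v) P) (hv : v ≠ 0) {s : Finset ι}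
    (hs : s.Nonempty) :
    P.real {ω | (16 * (∑ i, b i ^ 2) / (v * #s) + 32 * Fintype.card ι / #s) *
        ∑ i ∈ s, X i ω ^ 2 < ∑ i, X i ω ^ 2} ≤ 2 * exp (-(#s / 2)) := by
  have := hX.isProbabilityMeasure
  have : (0 : ℝ) < #s := by exact_mod_cast hs.card_pos
  have hcard : (#s : ℝ) ≤ Fintype.card ι := by exact_mod_cast card_le_univ s
  set S := ∑ i, b i ^ 2
  let large : Set Ω := {ω | 2 * S + 2 * v * Fintype.card ι + 4 * v * (#s / 2) ≤ ∑ i, X i ω ^ 2}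
  let small : Set Ω := {ω | ∑ i ∈ s, X i ω ^ 2 ≤ v * #s / 8}
  have hcover : {ω | (16 * S / (v * #s) + 32 * Fintype.card ι / #s) * ∑ i ∈ s, X i ω ^ 2 <
      ∑ i, X i ω ^ 2} ⊆ large ∪ small := by
    intro ω hω
    by_contra! hgood
    simp only [large, small, Set.mem_union, Set.mem_ofPred_eq, not_or, not_le] at hgood hω
    refine hω.not_ge ?_
    calc ∑ i, X i ω ^ 2 ≤ 2 * S + 2 * v * Fintype.card ι + 4 * v * (#s / 2) := hgood.1.le
      _ ≤ 2 * S + 4 * v * Fintype.card ι := by nlinarith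
      _ = (16 * S / (v * #s) + 32 * Fintype.card ι / #s) * (v * #s / 8) := by
        field_simp
        ring
      _ ≤ (16 * S / (v * #s) + 32 * Fintype.card ι / #s) * ∑ i ∈ s, X i ω ^ 2 := by
        gcongr
        exact hgood.2.le
  calc _ ≤ P.real (large ∪ small) := measureReal_mono hcover
    _ ≤ P.real large + P.real small := measureReal_union_le _ _
    _ ≤ exp (-(#s / 2)) + exp (-(#s / 2)) :=
        add_le_add (measureReal_le_sum_sq_le_exp_neg hX hlaw hv univ _)
          (measureReal_sum_sq_le_le_exp_neg hX hlaw hv s)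
    _ = 2 * exp (-(#s / 2)) := (two_mul _).symm

end NoncentralChiSquare

section RandomVariables

variable {Ω : Type*} [MeasurableSpace Ω] {P : Measure Ω}

lemma iIndepFun_curry {κ ι E : Type*} [Countable κ] [Countable ι] [MeasurableSpace E]
    {X : κ → ι → Ω → E} (hX : iIndepFun (fun p : κ × ι ↦ X p.1 p.2) P)
    (hmeas : ∀ i m, AEMeasurable (X i m) P) :
    iIndepFun (fun i ω m ↦ X i m ω) P := by
  have := hX.isProbabilityMeasure
  have hrow (i : κ) : iIndepFun (X i) P := hX.precomp (g := Prod.mk i) (Prod.mk_right_injective i)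
  have hprob (i : κ) (m : ι) : IsProbabilityMeasure (P.map (X i m)) :=
    Measure.isProbabilityMeasure_map (hmeas i m)
  rw [iIndepFun_iff_map_fun_eq_infinitePi_map₀' fun i ↦ aemeasurable_pi_iff.2 (hmeas i)]
  have hjoint : AEMeasurable (fun ω (p : κ × ι) ↦ X p.1 p.2 ω) P :=
    aemeasurable_pi_iff.2 fun p ↦ hmeas p.1 p.2
  calc P.map (fun ω i m ↦ X i m ω)
      = (P.map fun ω (p : κ × ι) ↦ X p.1 p.2 ω).map (MeasurableEquiv.curry κ ι E) := by
        rw [AEMeasurable.map_map_of_aemeasurable (by fun_prop) hjoint]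
        rfl
    _ = Measure.infinitePi fun i ↦ Measure.infinitePi fun m ↦ P.map (X i m) := by
        rw [hX.map_fun_eq_infinitePi_map₀ hjoint,
          Measure.infinitePi_map_curry fun i m ↦ P.map (X i m)]
    _ = Measure.infinitePi fun i ↦ P.map fun ω m ↦ X i m ω := by
        simp_rw [fun i ↦ (hrow i).map_fun_eq_infinitePi_map₀' (hmeas i)]

lemma iIndepFun_sub_rows {κ ι E : Type*} [Countable κ] [Countable ι] [MeasurableSpace E] [Sub E]
    [MeasurableSub₂ E] {X : κ → ι → Ω → E} (hX : iIndepFun (fun p : κ × ι ↦ X p.1 p.2) P)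
    (hmeas : ∀ i m, AEMeasurable (X i m) P) (i j : κ) :
    iIndepFun (fun m ω ↦ X i m ω - X j m ω) P :=
  (iIndepFun_curry (X := fun m i ↦ X i m) (hX.precomp Prod.swap_injective)
    fun m i ↦ hmeas i m).comp (fun _ y ↦ y i - y j) fun _ ↦ by fun_prop

lemma iIndepFun_uncurry_eval_pi {κ ι E : Type*} [Fintype κ] [Fintype ι] [MeasurableSpace E]
    (μ : κ → ι → Measure E) [∀ i m, IsProbabilityMeasure (μ i m)] :
    iIndepFun (fun (p : κ × ι) (ω : κ → ι → E) ↦ ω p.1 p.2)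
      (Measure.pi fun i ↦ Measure.pi (μ i)) := by
  simpa only [Measure.infinitePi_eq_pi] using
    iIndepFun_uncurry_infinitePi' (X := fun _ _ y ↦ y) μ fun _ _ ↦ measurable_id

lemma hasLaw_eval_eval_pi {κ ι E : Type*} [Fintype κ] [Fintype ι] [MeasurableSpace E]
    (μ : κ → ι → Measure E) [∀ i m, IsProbabilityMeasure (μ i m)] (i : κ) (m : ι) :
    HasLaw (fun ω : κ → ι → E ↦ ω i m) (μ i m) (Measure.pi fun i ↦ Measure.pi (μ i)) :=
  ((measurePreserving_eval (μ i) m).comp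
    (measurePreserving_eval (fun i ↦ Measure.pi (μ i)) i)).hasLaw

lemma hasLaw_sub_gaussianReal {X Y : Ω → ℝ} {a b : ℝ} {v w : ℝ≥0} (hXY : IndepFun X Y P)
    (hX : HasLaw X (gaussianReal a v) P) (hY : HasLaw Y (gaussianReal b w) P) :
    HasLaw (fun ω ↦ X ω - Y ω) (gaussianReal (a - b) (v + w)) P where
  map_eq := by
    have hXneg : IndepFun X (-Y) P := hXY.comp measurable_id measurable_neg
    rw [sub_eq_add_neg a b, ← gaussianReal_add_gaussianReal_of_indepFun hXneg hX.map_eq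
      (gaussianReal_neg hY).map_eq, ← sub_eq_add_neg]
    rfl

lemma one_sub_card_mul_le_measureReal_biInter {α : Type*} [IsProbabilityMeasure P] {s : Finset α}
    {G : α → Set Ω} {ε : ℝ} (hG : ∀ a ∈ s, P.real (G a)ᶜ ≤ ε) :
    1 - #s * ε ≤ P.real (⋂ a ∈ s, G a) := by
  have hcompl : P.real (⋂ a ∈ s, G a)ᶜ ≤ #s * ε := by
    rw [Set.compl_iInter₂]
    calc P.real (⋃ a ∈ s, (G a)ᶜ) ≤ ∑ a ∈ s, P.real (G a)ᶜ := measureReal_biUnion_finset_le s _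
      _ ≤ #s * ε := by simpa using sum_le_card_nsmul s _ ε hG
  have huniv : 1 ≤ P.real (⋂ a ∈ s, G a) + P.real (⋂ a ∈ s, G a)ᶜ := by
    simpa [-Set.compl_iInter] using measureReal_union_le (μ := P) (⋂ a ∈ s, G a) (⋂ a ∈ s, G a)ᶜ
  linarith

end RandomVariables

lemma sum_sub_sq_le_four_mul_sq {ι : Type*} [Fintype ι] {B : ℝ} {a b : ι → ℝ}
    (ha : √(∑ m, a m ^ 2) ≤ B) (hb : √(∑ m, b m ^ 2) ≤ B) :
    ∑ m, (a m - b m) ^ 2 ≤ 4 * B ^ 2 := by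
  have hparallelogram : ∑ m, (a m - b m) ^ 2 ≤ 2 * ∑ m, a m ^ 2 + 2 * ∑ m, b m ^ 2 := by
    rw [mul_sum, mul_sum, ← sum_add_distrib]
    exact sum_le_sum fun m _ ↦ by nlinarith [sq_nonneg (a m + b m)]
  have hB : 0 ≤ B := (sqrt_nonneg _).trans ha
  linarith [(sqrt_le_left hB).1 ha, (sqrt_le_left hB).1 hb]

lemma half_le_log_of_two_le {n : ℕ} (hn : 2 ≤ n) : 1 / 2 ≤ log n := by
  have hlog : log 2 ≤ log n := log_le_log (by norm_num) (by exact_mod_cast hn)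
  linarith [log_two_gt_d9]

lemma exp_neg_half_le_one_div_pow_four {n : ℕ} (hn : 2 ≤ n) {D : ℝ} (hD : 16 * log n ^ 2 ≤ D) :
    exp (-(D / 2)) ≤ 1 / (n : ℝ) ^ 4 := by
  have hn0 : (0 : ℝ) < n := by positivity
  have hlog := half_le_log_of_two_le hn
  calc exp (-(D / 2)) ≤ exp (-((4 : ℕ) * log n)) :=
        exp_le_exp.2 (by push_cast; nlinarith)
    _ = 1 / (n : ℝ) ^ 4 := by rw [exp_neg, exp_nat_mul, exp_log hn0, one_div]

lemma distortion_factor_le {B r L D S d : ℝ} (hB : 0 < B) (hr : 0 < r) (hL : 1 / 2 ≤ L)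
    (hD : 16 * L ^ 2 ≤ D) (hS : S ≤ 4 * B ^ 2) (hd : 0 ≤ d) :
    16 * S / (2 * (r * B) ^ 2 * D) + 32 * d / D ≤ 8 * (1 / r ^ 2 + d / L ^ 2) := by
  have hD4 : 4 ≤ D := by nlinarith
  have hcenters : 16 * S / (2 * (r * B) ^ 2 * D) ≤ 8 / r ^ 2 :=
    calc 16 * S / (2 * (r * B) ^ 2 * D) ≤ 16 * (4 * B ^ 2) / (2 * (r * B) ^ 2 * 4) := by gcongr
      _ = 8 / r ^ 2 := by field_simp; norm_num
  have hnoise : 32 * d / D ≤ 2 * d / L ^ 2 :=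
    calc 32 * d / D ≤ 32 * d / (16 * L ^ 2) := by gcongr
      _ = 2 * d / L ^ 2 := by field_simp; ring
  have hslack : 2 * d / L ^ 2 ≤ 8 * d / L ^ 2 := by gcongr; norm_num
  calc _ ≤ 8 / r ^ 2 + 8 * d / L ^ 2 := add_le_add hcenters (hnoise.trans hslack)
    _ = 8 * (1 / r ^ 2 + d / L ^ 2) := by ring

section Perturbation

variable {Ω κ ι : Type*} [MeasurableSpace Ω] [Fintype ι] {P : Measure Ω} {x : κ → ι → ℝ}

lemma measureReal_sum_sub_sq_gt_mul_sum_sub_sq_le [Countable κ] {X : κ → ι → Ω → ℝ} {v : ℝ≥0}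
    (hX : iIndepFun (fun p : κ × ι ↦ X p.1 p.2) P)
    (hlaw : ∀ i m, HasLaw (X i m) (gaussianReal (x i m) v) P) (hv : v ≠ 0) {s : Finset ι}
    (hs : s.Nonempty) {i j : κ} (hij : i ≠ j) :
    P.real {ω | (16 * (∑ m, (x i m - x j m) ^ 2) / (2 * v * #s) + 32 * Fintype.card ι / #s) *
        ∑ m ∈ s, (X i m ω - X j m ω) ^ 2 < ∑ m, (X i m ω - X j m ω) ^ 2} ≤
      2 * exp (-(#s / 2)) := by
  have hindep := iIndepFun_sub_rows hX (fun i m ↦ (hlaw i m).aemeasurable) i j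
  have hdiff (m : ι) :
      HasLaw (fun ω ↦ X i m ω - X j m ω) (gaussianReal (x i m - x j m) (2 * v)) P := by
    rw [two_mul]
    exact hasLaw_sub_gaussianReal (hX.indepFun (i := (i, m)) (j := (j, m)) (by simp [hij]))
      (hlaw i m) (hlaw j m)
  exact_mod_cast measureReal_sum_sq_gt_mul_sum_sq_le hindep hdiff (mul_ne_zero two_ne_zero hv) hs

variable [Fintype κ] {B r : ℝ} {ξ : κ → ι → Ω → ℝ}

lemma measureReal_compl_perturbed_pair_le (hcard : 2 ≤ Fintype.card κ) (hB : 0 < B) (hr : 0 < r)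
    (hx : ∀ i, √(∑ m, x i m ^ 2) ≤ B) (hξ : iIndepFun (fun p : κ × ι ↦ ξ p.1 p.2) P)
    (hlaw : ∀ i m, HasLaw (ξ i m) (gaussianReal 0 ((r * B) ^ 2).toNNReal) P)
    {s : Finset ι} (hs : 16 * log (Fintype.card κ) ^ 2 ≤ #s) {i j : κ} (hij : i ≠ j) :
    P.real {ω | ∑ m, ((x i m + ξ i m ω) - (x j m + ξ j m ω)) ^ 2 ≤
        8 * (1 / r ^ 2 + Fintype.card ι / log (Fintype.card κ) ^ 2) *
          ∑ m ∈ s, ((x i m + ξ i m ω) - (x j m + ξ j m ω)) ^ 2}ᶜ ≤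
      2 / (Fintype.card κ : ℝ) ^ 4 := by
  have := hξ.isProbabilityMeasure
  set v := ((r * B) ^ 2).toNNReal
  have hv : (v : ℝ) = (r * B) ^ 2 := Real.coe_toNNReal _ (sq_nonneg _)
  have hv0 : v ≠ 0 := (Real.toNNReal_pos.2 (by positivity)).ne'
  have hL := half_le_log_of_two_le hcard
  have hs0 : s.Nonempty := card_pos.1 (by exact_mod_cast (show (0 : ℝ) < #s by nlinarith))
  have hindep : iIndepFun (fun (p : κ × ι) ω ↦ x p.1 p.2 + ξ p.1 p.2 ω) P :=
    hξ.comp (fun p y ↦ x p.1 p.2 + y) fun _ ↦ by fun_prop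
  have hperturbed (i : κ) (m : ι) :
      HasLaw (fun ω ↦ x i m + ξ i m ω) (gaussianReal (x i m) v) P := by
    simpa only [zero_add] using gaussianReal_const_add (hlaw i m) (x i m)
  have hfactor := distortion_factor_le hB hr hL hs
    (sum_sub_sq_le_four_mul_sq (hx i) (hx j)) (Fintype.card ι).cast_nonneg
  calc _ ≤ P.real _ := measureReal_mono fun ω hω ↦ ?_
    _ ≤ 2 * exp (-(#s / 2)) := measureReal_sum_sub_sq_gt_mul_sum_sub_sq_le
        (X := fun i m ω ↦ x i m + ξ i m ω) hindep hperturbed hv0 hs0 hij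
    _ ≤ 2 * (1 / (Fintype.card κ : ℝ) ^ 4) := by
        gcongr
        exact exp_neg_half_le_one_div_pow_four hcard hs
    _ = 2 / (Fintype.card κ : ℝ) ^ 4 := by ring
  simp only [Set.mem_compl_iff, Set.mem_ofPred_eq, not_le] at hω ⊢
  refine lt_of_le_of_lt ?_ hω
  rw [hv]
  gcongr

theorem perturbed_data_satisfies_vkmc_assumption_general (hcard : 2 ≤ Fintype.card κ)
    (hB : 0 < B) (hr : 0 < r) (hx : ∀ i, √(∑ m, x i m ^ 2) ≤ B)
    (hξ : iIndepFun (fun p : κ × ι ↦ ξ p.1 p.2) P)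
    (hlaw : ∀ i m, HasLaw (ξ i m) (gaussianReal 0 ((r * B) ^ 2).toNNReal) P)
    {s : Finset ι} (hs : 16 * log (Fintype.card κ) ^ 2 ≤ #s) :
    1 - 2 / (Fintype.card κ : ℝ) ^ 2 ≤
      P.real {ω | ∀ i j, i ≠ j →
        ∑ m, ((x i m + ξ i m ω) - (x j m + ξ j m ω)) ^ 2 ≤
          8 * (1 / r ^ 2 + Fintype.card ι / log (Fintype.card κ) ^ 2) *
            ∑ m ∈ s, ((x i m + ξ i m ω) - (x j m + ξ j m ω)) ^ 2} := by
  classical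
  have := hξ.isProbabilityMeasure
  have hpairs : (#(univ : Finset κ).offDiag : ℝ) ≤ (Fintype.card κ : ℝ) ^ 2 := by
    rw [offDiag_card, card_univ, sq]
    exact_mod_cast Nat.sub_le _ _
  calc 1 - 2 / (Fintype.card κ : ℝ) ^ 2
      = 1 - (Fintype.card κ : ℝ) ^ 2 * (2 / (Fintype.card κ : ℝ) ^ 4) := by
        field_simp
    _ ≤ 1 - #(univ : Finset κ).offDiag * (2 / (Fintype.card κ : ℝ) ^ 4) := by gcongr
    _ ≤ _ := one_sub_card_mul_le_measureReal_biInter fun p hp ↦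
        measureReal_compl_perturbed_pair_le hcard hB hr hx hξ hlaw hs (mem_offDiag.1 hp).2.2
    _ = _ := by
        congr 1
        ext ω
        simp

end Perturbation

/-- there are absolute constants `C₀, C₁ > 0` such that for any `n ≥ 2` points
`x_i ∈ ℝ^d` with `‖x_i‖₂ ≤ B`, whose coordinates are partitioned into `T` blocks via
`blk : Fin d → Fin T`, if block `t` has maximal size `d_t ≥ C₀ (log n)²`, then after adding
independent Gaussian perturbations with i.i.d. `N(0, r²B²)` coordinates, with probability
at least `1 - 4/n²`, for all `i ≠ j`,
`‖x̃_i - x̃_j‖₂² ≤ C₁ (1/r² + d/(log n)²) ‖x̃_i^{(t)} - x̃_j^{(t)}‖₂²`. -/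
theorem perturbed_data_satisfies_vkmc_assumption :
    ∃ C₀ C₁ : ℝ, 0 < C₀ ∧ 0 < C₁ ∧ ∀ n d T : ℕ, 2 ≤ n → ∀ B r : ℝ, 0 < B → 0 < r →
      ∀ x : Fin n → Fin d → ℝ,
        (∀ i, Real.sqrt (∑ m, x i m ^ 2) ≤ B) →
        ∀ (blk : Fin d → Fin T) (t : Fin T),
        (∀ j : Fin T, (Finset.univ.filter fun m => blk m = j).card ≤
            (Finset.univ.filter fun m => blk m = t).card) →
        C₀ * Real.log n ^ 2 ≤ ((Finset.univ.filter fun m => blk m = t).card : ℝ) →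
        ENNReal.ofReal (1 - 4 / (n : ℝ) ^ 2) ≤
          (Measure.pi fun _ : Fin n => Measure.pi fun _ : Fin d =>
              gaussianReal 0 ((r * B) ^ 2).toNNReal)
            {ξ : Fin n → Fin d → ℝ | ∀ i j, i ≠ j →
              (∑ m, ((x i m + ξ i m) - (x j m + ξ j m)) ^ 2) ≤
                C₁ * (1 / r ^ 2 + (d : ℝ) / Real.log n ^ 2) *
                  ∑ m ∈ Finset.univ.filter (fun m => blk m = t),
                    ((x i m + ξ i m) - (x j m + ξ j m)) ^ 2} := by
  refine ⟨16, 8, by norm_num, by norm_num, fun n d T hn B r hB hr x hx blk t _ hblock ↦ ?_⟩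
  let μ (_ : Fin n) (_ : Fin d) : Measure ℝ := gaussianReal 0 ((r * B) ^ 2).toNNReal
  have hgeneral := perturbed_data_satisfies_vkmc_assumption_general (by simpa using hn) hB hr hx
    (iIndepFun_uncurry_eval_pi μ) (hasLaw_eval_eval_pi μ)
    (by simpa only [Fintype.card_fin] using hblock)
  simp only [Fintype.card_fin] at hgeneral
  exact ENNReal.ofReal_le_of_le_toReal (le_trans (by gcongr; norm_num) hgeneral)
end

section
/- Let X ∈ ℝ^{n×d} with rows x_1ᵀ, …, x_nᵀ, let y ∈ ℝ^n, and let U ∈ ℝ^{n×d'} and A ∈ ℝ^{d'×(d+1)} be matrices such that the augmented matrix [X, y] equals U·A. Suppose γ > 0 satisfies ‖U w‖₂ ≥ γ ‖w‖₂ for all w ∈ ℝ^{d'}. Then for every i ∈ [n] and every θ ∈ ℝ^d: (x_iᵀθ − y_i)² ≤ (‖u_i‖₂² / γ²) · ‖Xθ − y‖₂², where u_i denotes the i-th row of U. -/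
/-!
The residual is `Xθ - y = [X, y] (θ, -1) = U w` with `w = A (θ, -1)`, so its `i`-th entry is the
dot product of `u_i` with `w`. Cauchy–Schwarz bounds this entry by `‖u_i‖ ‖w‖`, and the lower bound
on `U` gives `‖w‖ ≤ ‖U w‖ / γ = ‖Xθ - y‖ / γ`.
-/

open Matrix

theorem snoc_dotProduct_snoc {R : Type*} [NonUnitalNonAssocSemiring R] {d : ℕ}
    (u v : Fin d → R) (a b : R) :
    (Fin.snoc u a : Fin (d + 1) → R) ⬝ᵥ Fin.snoc v b = u ⬝ᵥ v + a * b := by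
  simp [dotProduct, Fin.sum_univ_castSucc]

theorem of_snoc_mulVec_snoc {m R : Type*} [NonUnitalNonAssocSemiring R] {d : ℕ}
    (X : Matrix m (Fin d) R) (y : m → R) (θ : Fin d → R) (t : R) :
    (of fun i => Fin.snoc (X i) (y i) : Matrix m (Fin (d + 1)) R) *ᵥ Fin.snoc θ t =
      X *ᵥ θ + MulOpposite.op t • y :=
  funext fun i => snoc_dotProduct_snoc (X i) θ (y i) t

theorem mulVec_apply_sq_le_div_mul_sum_sq {m k R : Type*} [Fintype m] [Fintype k]
    [Field R] [LinearOrder R] [IsStrictOrderedRing R] (U : Matrix m k R) {γ : R} (hγ : γ ≠ 0)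
    {w : k → R} (hw : γ ^ 2 * ∑ c, w c ^ 2 ≤ ∑ j, (U *ᵥ w) j ^ 2) (i : m) :
    (U *ᵥ w) i ^ 2 ≤ (∑ c, U i c ^ 2) / γ ^ 2 * ∑ j, (U *ᵥ w) j ^ 2 :=
  calc (U *ᵥ w) i ^ 2
    _ ≤ (∑ c, U i c ^ 2) * ∑ c, w c ^ 2 := Finset.sum_mul_sq_le_sq_mul_sq _ _ _
    _ = (∑ c, U i c ^ 2) / γ ^ 2 * (γ ^ 2 * ∑ c, w c ^ 2) := by field_simp
    _ ≤ (∑ c, U i c ^ 2) / γ ^ 2 * ∑ j, (U *ᵥ w) j ^ 2 := by gcongr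

theorem mul_sqrt_le_sqrt_iff {γ a b : ℝ} (hγ : 0 ≤ γ) (hb : 0 ≤ b) :
    γ * √a ≤ √b ↔ γ ^ 2 * a ≤ b := by
  rw [← Real.sqrt_le_sqrt_iff hb, Real.sqrt_mul (sq_nonneg γ), Real.sqrt_sq hγ]

/-- if `[X, y] = U · A` and `‖U w‖₂ ≥ γ ‖w‖₂` for all `w`, then for every row
`i` and every `θ`, `(x_iᵀθ - y_i)² ≤ (‖u_i‖₂²/γ²) ‖Xθ - y‖₂²`. -/
theorem regression_residual_sensitivity_bound (n d d' : ℕ)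
    (X : Matrix (Fin n) (Fin d) ℝ) (y : Fin n → ℝ)
    (U : Matrix (Fin n) (Fin d') ℝ) (A : Matrix (Fin d') (Fin (d + 1)) ℝ)
    (haug : (Matrix.of fun i => Fin.snoc (X i) (y i)) = U * A)
    (γ : ℝ) (hγ : 0 < γ)
    (hU : ∀ w : Fin d' → ℝ,
      γ * Real.sqrt (∑ c, w c ^ 2) ≤ Real.sqrt (∑ i, U.mulVec w i ^ 2)) :
    ∀ (i : Fin n) (θ : Fin d → ℝ),
      ((∑ m, X i m * θ m) - y i) ^ 2 ≤
        (∑ c, U i c ^ 2) / γ ^ 2 * ∑ i', (X.mulVec θ i' - y i') ^ 2 := by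
  intro i θ
  let w : Fin d' → ℝ := A *ᵥ Fin.snoc θ (-1)
  have mulVec_eq_residual : U *ᵥ w = X *ᵥ θ - y := by
    rw [mulVec_mulVec, ← haug, of_snoc_mulVec_snoc, MulOpposite.op_neg, MulOpposite.op_one,
      neg_one_smul, sub_eq_add_neg]
  have sq_lower_bound : γ ^ 2 * ∑ c, w c ^ 2 ≤ ∑ j, (U *ᵥ w) j ^ 2 :=
    (mul_sqrt_le_sqrt_iff hγ.le (by positivity)).mp (hU w)
  have entry_bound := mulVec_apply_sq_le_div_mul_sum_sq U hγ.ne' sq_lower_bound i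
  rwa [mulVec_eq_residual] at entry_bound
end

section
/- Let X ∈ ℝ^{n×d} with rows x_1ᵀ, …, x_nᵀ, let y ∈ ℝ^n, and let U ∈ ℝ^{n×d'} and A ∈ ℝ^{d'×(d+1)} be matrices such that [X, y] = U·A. Suppose γ > 0 satisfies ‖U w‖₂ ≥ γ ‖w‖₂ for all w ∈ ℝ^{d'}. Let R : ℝ^d → ℝ_{≥0} and λ ≥ 0. Then for every i ∈ [n] and every θ ∈ ℝ^d with ‖Xθ − y‖₂² + λR(θ) > 0: ( (x_iᵀθ − y_i)² + λR(θ)/n ) / ( ‖Xθ − y‖₂² + λR(θ) ) ≤ ‖u_i‖₂²/γ² + 1/n, where u_i denotes the i-th row of U. That is, the sensitivity of the i-th point for regularized linear regression is at most ‖u_i‖₂²/γ² + 1/n. -/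
/-!
The residual `Xθ - y` is `[X, y]` applied to `(θ, -1)`, hence equals `U w` with `w = A (θ, -1)`.
Cauchy–Schwarz and the singular value bound give
`(U w)ᵢ² ≤ ‖uᵢ‖² ‖w‖² ≤ (‖uᵢ‖² / γ²) ‖U w‖²`, so point `i` carries at most the fraction
`‖uᵢ‖² / γ²` of the squared loss, and it carries exactly the fraction `1 / n` of the regularizer.
-/

open Matrix

theorem of_snoc_mulVec_snoc_neg_one {ι S : Type*} [NonAssocRing S] {d : ℕ}
    (X : Matrix ι (Fin d) S) (y : ι → S) (θ : Fin d → S) :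
    (of fun i => Fin.snoc (X i) (y i) : Matrix ι (Fin (d + 1)) S) *ᵥ
      Fin.snoc (α := fun _ => S) θ (-1) = X *ᵥ θ - y := by
  ext i
  simp [mulVec, dotProduct, Fin.sum_univ_castSucc, sub_eq_add_neg]

theorem sq_mul_le_of_mul_sqrt_le_sqrt {a b c : ℝ} (hc : 0 ≤ c) (hb : 0 ≤ b)
    (h : c * √a ≤ √b) : c ^ 2 * a ≤ b := by
  rwa [← Real.sqrt_le_sqrt_iff hb, Real.sqrt_mul (sq_nonneg c), Real.sqrt_sq hc]

section LinearOrderedField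

variable {K : Type*} [Field K] [LinearOrder K] [IsStrictOrderedRing K]

theorem sq_mulVec_apply_le_div_mul_sum_sq {ι κ : Type*} [Fintype ι] [Fintype κ]
    (U : Matrix ι κ K) (w : κ → K) {σ : K} (hσ : 0 < σ)
    (hw : σ * ∑ c, w c ^ 2 ≤ ∑ j, (U *ᵥ w) j ^ 2) (i : ι) :
    (U *ᵥ w) i ^ 2 ≤ (∑ c, U i c ^ 2) / σ * ∑ j, (U *ᵥ w) j ^ 2 :=
  calc (U *ᵥ w) i ^ 2
      ≤ (∑ c, U i c ^ 2) * ∑ c, w c ^ 2 := Finset.sum_mul_sq_le_sq_mul_sq _ (U i) w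
    _ = (∑ c, U i c ^ 2) / σ * (σ * ∑ c, w c ^ 2) := by field_simp
    _ ≤ (∑ c, U i c ^ 2) / σ * ∑ j, (U *ᵥ w) j ^ 2 := by gcongr

theorem add_mul_div_add_le_add {s S L p q : K} (hS : 0 ≤ S) (hL : 0 ≤ L) (hSL : 0 < S + L)
    (hp : 0 ≤ p) (hq : 0 ≤ q) (hs : s ≤ p * S) : (s + q * L) / (S + L) ≤ p + q := by
  rw [div_le_iff₀ hSL]
  calc s + q * L ≤ p * (S + L) + q * (S + L) := by
        gcongr
        · exact hs.trans (by gcongr; exact le_add_of_nonneg_right hL)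
        · exact le_add_of_nonneg_left hS
    _ = (p + q) * (S + L) := (add_mul p q (S + L)).symm

end LinearOrderedField

/-- under the same hypotheses as Statement 7, the sensitivity of point `i`
for regularized linear regression is at most `‖u_i‖₂²/γ² + 1/n`. -/
theorem regularized_regression_sensitivity_bound (n d d' : ℕ) (hn : 0 < n)
    (X : Matrix (Fin n) (Fin d) ℝ) (y : Fin n → ℝ)
    (U : Matrix (Fin n) (Fin d') ℝ) (A : Matrix (Fin d') (Fin (d + 1)) ℝ)
    (haug : (Matrix.of fun i => Fin.snoc (X i) (y i)) = U * A)
    (γ : ℝ) (hγ : 0 < γ)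
    (hU : ∀ w : Fin d' → ℝ,
      γ * Real.sqrt (∑ c, w c ^ 2) ≤ Real.sqrt (∑ i, U.mulVec w i ^ 2))
    (R : (Fin d → ℝ) → ℝ) (hR : ∀ θ, 0 ≤ R θ) (lam : ℝ) (hlam : 0 ≤ lam) :
    ∀ (i : Fin n) (θ : Fin d → ℝ),
      0 < (∑ i', (X.mulVec θ i' - y i') ^ 2) + lam * R θ →
      (((∑ m, X i m * θ m) - y i) ^ 2 + lam * R θ / n) /
          ((∑ i', (X.mulVec θ i' - y i') ^ 2) + lam * R θ) ≤
        (∑ c, U i c ^ 2) / γ ^ 2 + 1 / n := by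
  intro i θ hpos
  set w := A *ᵥ Fin.snoc (α := fun _ => ℝ) θ (-1)
  have residual_eq : U *ᵥ w = X *ᵥ θ - y := by
    rw [mulVec_mulVec, ← haug, of_snoc_mulVec_snoc_neg_one]
  have gram_bound : γ ^ 2 * ∑ c, w c ^ 2 ≤ ∑ j, (U *ᵥ w) j ^ 2 :=
    sq_mul_le_of_mul_sqrt_le_sqrt hγ.le (by positivity) (hU w)
  have loss_bound : (X *ᵥ θ - y) i ^ 2 ≤
      (∑ c, U i c ^ 2) / γ ^ 2 * ∑ j, (X *ᵥ θ - y) j ^ 2 := by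
    rw [← residual_eq]
    exact sq_mulVec_apply_le_div_mul_sum_sq U w (pow_pos hγ 2) gram_bound i
  rw [div_eq_inv_mul (lam * R θ), ← one_div]
  exact add_mul_div_add_le_add (by positivity) (mul_nonneg hlam (hR θ)) hpos
    (by positivity) (by positivity) loss_bound
end

section
/- Let x_1, …, x_n ∈ ℝ^d, let P : ℝ^d → ℝ^{d_t} be the projection onto a fixed subset of d_t coordinates, and let τ > 0 satisfy ‖x_i − x_j‖₂² ≤ τ ‖P x_i − P x_j‖₂² for all i, j ∈ [n]. Let B_1, …, B_k be a partition of [n] into nonempty sets, let c_1, …, c_k ∈ ℝ^{d_t} be arbitrary points, and for each l let μ_l = (1/|B_l|) Σ_{i∈B_l} x_i ∈ ℝ^d be the centroid of cluster B_l. Then Σ_{i=1}^n min_{1≤l≤k} ‖x_i − μ_l‖₂² ≤ τ · Σ_{l=1}^k Σ_{i∈B_l} ‖P x_i − c_l‖₂². -/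
/-!
For `N` points and any center `c`,
`∑ i j, ‖x i - x j‖ ^ 2 = 2 * N * ∑ i, ‖x i - c‖ ^ 2 - 2 * ‖∑ i, (x i - c)‖ ^ 2`.
The last term vanishes when `c` is the centroid and only helps otherwise, so a comparison of
pairwise squared distances becomes a comparison, cluster by cluster, of the cost at the centroid
with the cost at any other center.
-/

open Finset

section PairwiseDistances

variable {ι E F : Type*} [NormedAddCommGroup E] [InnerProductSpace ℝ E]
  [NormedAddCommGroup F] [InnerProductSpace ℝ F]

theorem sum_sum_norm_sub_sq (s : Finset ι) (x : ι → E) :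
    ∑ i ∈ s, ∑ j ∈ s, ‖x i - x j‖ ^ 2 = 2 * #s * ∑ i ∈ s, ‖x i‖ ^ 2 - 2 * ‖∑ i ∈ s, x i‖ ^ 2 := by
  have norm_sum_sq : ‖∑ i ∈ s, x i‖ ^ 2 = ∑ i ∈ s, ∑ j ∈ s, inner ℝ (x i) (x j) := by
    rw [← real_inner_self_eq_norm_sq, sum_inner]
    simp only [inner_sum]
  simp only [norm_sub_sq_real, norm_sum_sq, sum_add_distrib, sum_sub_distrib, sum_const,
    nsmul_eq_mul, ← mul_sum]
  ring

theorem sum_sum_norm_sub_sq_eq_sub_center (s : Finset ι) (x : ι → E) (c : E) :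
    ∑ i ∈ s, ∑ j ∈ s, ‖x i - x j‖ ^ 2 =
      2 * #s * ∑ i ∈ s, ‖x i - c‖ ^ 2 - 2 * ‖∑ i ∈ s, (x i - c)‖ ^ 2 := by
  simpa only [sub_sub_sub_cancel_right] using sum_sum_norm_sub_sq s fun i ↦ x i - c

theorem sum_sum_norm_sub_sq_le (s : Finset ι) (x : ι → E) (c : E) :
    ∑ i ∈ s, ∑ j ∈ s, ‖x i - x j‖ ^ 2 ≤ 2 * #s * ∑ i ∈ s, ‖x i - c‖ ^ 2 := by
  rw [sum_sum_norm_sub_sq_eq_sub_center s x c]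
  exact sub_le_self _ (by positivity)

theorem sum_sum_norm_sub_sq_of_card_nsmul_eq_sum {s : Finset ι} {x : ι → E} {μ : E}
    (hμ : #s • μ = ∑ i ∈ s, x i) :
    ∑ i ∈ s, ∑ j ∈ s, ‖x i - x j‖ ^ 2 = 2 * #s * ∑ i ∈ s, ‖x i - μ‖ ^ 2 := by
  have sum_sub_centroid : ∑ i ∈ s, (x i - μ) = 0 := by
    rw [sum_sub_distrib, sum_const, hμ, sub_self]
  simp [sum_sum_norm_sub_sq_eq_sub_center s x μ, sum_sub_centroid]

theorem sum_norm_sub_centroid_sq_le {s : Finset ι} {x : ι → E} {y : ι → F} {τ : ℝ} (hτ : 0 ≤ τ)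
    (hxy : ∀ i ∈ s, ∀ j ∈ s, ‖x i - x j‖ ^ 2 ≤ τ * ‖y i - y j‖ ^ 2)
    {μ : E} (hμ : #s • μ = ∑ i ∈ s, x i) (c : F) :
    ∑ i ∈ s, ‖x i - μ‖ ^ 2 ≤ τ * ∑ i ∈ s, ‖y i - c‖ ^ 2 := by
  rcases s.eq_empty_or_nonempty with rfl | hs
  · simp
  have two_card_pos : (0 : ℝ) < 2 * #s := by simpa using hs.card_pos
  refine le_of_mul_le_mul_left ?_ two_card_pos
  calc 2 * #s * ∑ i ∈ s, ‖x i - μ‖ ^ 2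
      = ∑ i ∈ s, ∑ j ∈ s, ‖x i - x j‖ ^ 2 := (sum_sum_norm_sub_sq_of_card_nsmul_eq_sum hμ).symm
    _ ≤ ∑ i ∈ s, ∑ j ∈ s, τ * ‖y i - y j‖ ^ 2 :=
        sum_le_sum fun i hi ↦ sum_le_sum fun j hj ↦ hxy i hi j hj
    _ = τ * ∑ i ∈ s, ∑ j ∈ s, ‖y i - y j‖ ^ 2 := by simp only [mul_sum]
    _ ≤ τ * (2 * #s * ∑ i ∈ s, ‖y i - c‖ ^ 2) := by gcongr; exact sum_sum_norm_sub_sq_le s y c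
    _ = 2 * #s * (τ * ∑ i ∈ s, ‖y i - c‖ ^ 2) := by ring

end PairwiseDistances

theorem sum_iInf_le_sum_sum_of_cover {ι κ : Type*} [Fintype ι] [Fintype κ] {f : ι → κ → ℝ}
    (hf : ∀ i l, 0 ≤ f i l) {B : κ → Finset ι} (hB : ∀ i, ∃ l, i ∈ B l) :
    ∑ i, ⨅ l, f i l ≤ ∑ l, ∑ i ∈ B l, f i l := by
  classical
  calc ∑ i, ⨅ l, f i l
      ≤ ∑ i, ∑ l with i ∈ B l, f i l := by
        refine sum_le_sum fun i _ ↦ ?_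
        obtain ⟨l, hl⟩ := hB i
        calc ⨅ l, f i l ≤ f i l := ciInf_le (Set.finite_range _).bddBelow l
          _ ≤ ∑ l with i ∈ B l, f i l :=
            single_le_sum (fun l _ ↦ hf i l) (mem_filter.2 ⟨mem_univ l, hl⟩)
    _ = ∑ l, ∑ i ∈ B l, f i l := sum_comm' (by simp)

/-- The centroids are specified by `#(B l) • μ l = ∑ i ∈ B l, x i`, which leaves the center of an
empty cluster arbitrary. -/
theorem local_partition_centroid_cost_bound_general {ι κ E F : Type*} [Fintype ι] [Fintype κ]
    [NormedAddCommGroup E] [InnerProductSpace ℝ E] [NormedAddCommGroup F] [InnerProductSpace ℝ F]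
    {x : ι → E} {y : ι → F} {τ : ℝ} (hτ : 0 ≤ τ) {B : κ → Finset ι}
    (hxy : ∀ l, ∀ i ∈ B l, ∀ j ∈ B l, ‖x i - x j‖ ^ 2 ≤ τ * ‖y i - y j‖ ^ 2)
    (hB : ∀ i, ∃ l, i ∈ B l) {μ : κ → E} (hμ : ∀ l, #(B l) • μ l = ∑ i ∈ B l, x i) (c : κ → F) :
    ∑ i, ⨅ l, ‖x i - μ l‖ ^ 2 ≤ τ * ∑ l, ∑ i ∈ B l, ‖y i - c l‖ ^ 2 := by
  calc ∑ i, ⨅ l, ‖x i - μ l‖ ^ 2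
      ≤ ∑ l, ∑ i ∈ B l, ‖x i - μ l‖ ^ 2 := sum_iInf_le_sum_sum_of_cover (fun _ _ ↦ sq_nonneg _) hB
    _ ≤ ∑ l, τ * ∑ i ∈ B l, ‖y i - c l‖ ^ 2 :=
        sum_le_sum fun l _ ↦ sum_norm_sub_centroid_sq_le hτ (hxy l) (hμ l) (c l)
    _ = τ * ∑ l, ∑ i ∈ B l, ‖y i - c l‖ ^ 2 := (mul_sum ..).symm

/-- if one party's coordinates (the image of the injection `emb`) determine
pairwise squared distances up to factor `τ`, then the k-means cost of the full data with
the cluster centroids `μ_l` as centers is at most `τ` times the cost of assigning, within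
each cluster `B_l`, the projected points to the arbitrary local centers `c_l`. -/
theorem local_partition_centroid_cost_bound (n d dt k : ℕ) (hk : 0 < k)
    (x : Fin n → Fin d → ℝ)
    (emb : Fin dt → Fin d) (hemb : Function.Injective emb)
    (τ : ℝ) (hτ : 0 < τ)
    (hproj : ∀ i j, (∑ m, (x i m - x j m) ^ 2) ≤ τ * ∑ a, (x i (emb a) - x j (emb a)) ^ 2)
    (B : Fin k → Finset (Fin n))
    (hne : ∀ l, (B l).Nonempty)
    (hdisj : ∀ l l', l ≠ l' → Disjoint (B l) (B l'))
    (hcover : ∀ i, ∃ l, i ∈ B l)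
    (c : Fin k → Fin dt → ℝ)
    (μ : Fin k → Fin d → ℝ)
    (hμ : ∀ l, μ l = fun m => (∑ i ∈ B l, x i m) / (B l).card) :
    ∑ i, ⨅ l, ∑ m, (x i m - μ l m) ^ 2 ≤
      τ * ∑ l, ∑ i ∈ B l, ∑ a, (x i (emb a) - c l a) ^ 2 := by
  have card_nsmul_centroid (l : Fin k) :
      #(B l) • WithLp.toLp 2 (μ l) = ∑ i ∈ B l, WithLp.toLp 2 (x i) := by
    have card_ne_zero : (#(B l) : ℝ) ≠ 0 := by simpa using (hne l).ne_empty
    ext m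
    simp [hμ l, mul_div_cancel₀ _ card_ne_zero]
  simpa [EuclideanSpace.real_norm_sq_eq] using
    local_partition_centroid_cost_bound_general (x := fun i ↦ WithLp.toLp 2 (x i))
      (y := fun i ↦ WithLp.toLp 2 (x i ∘ emb)) hτ.le
      (fun _ i _ j _ ↦ by simpa [EuclideanSpace.real_norm_sq_eq] using hproj i j)
      hcover card_nsmul_centroid fun l ↦ WithLp.toLp 2 (c l)
end

section
/- Let x_1, …, x_n ∈ ℝ^d, let P : ℝ^d → ℝ^{d_t} be the projection onto a fixed subset of d_t coordinates, and let τ ≥ 1 satisfy ‖x_i − x_j‖₂² ≤ τ ‖P x_i − P x_j‖₂² for all i, j ∈ [n]. Let C̃^{(t)} = {c̃_1, …, c̃_k} ⊆ ℝ^{d_t} be an α-approximate solution (α ≥ 1, with ατ ≥ 1) for k-means on the projected data, i.e. Σ_i min_l ‖P x_i − c̃_l‖₂² ≤ α · Σ_i min_{c∈C'} ‖P x_i − c‖₂² for every set C' of k points in ℝ^{d_t}; assume L := Σ_i min_l ‖P x_i − c̃_l‖₂² > 0. For each i let π(i) ∈ argmin_l ‖P x_i − c̃_l‖₂ and B_l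 = {i : π(i) = l}. Then for every i ∈ [n] and every set C of k points in ℝ^d with cost(X, C) > 0: d(x_i, C)² / cost(X, C) ≤ 4ατ · d(P x_i, C̃^{(t)})² / L + 4ατ · ( Σ_{j∈B_{π(i)}} d(P x_j, C̃^{(t)})² ) / ( |B_{π(i)}| · L ) + 8ατ / |B_{π(i)}|. -/
/-!
Let `j` share the local center `y` of `i`. The relaxed triangle inequality through `x j` gives
`d(x i, C) ≤ ρ (δ (x i) (x j) + d(x j, C))`, and `δ (x i) (x j)` is at most `τ` times the local
dissimilarity `ε (P (x i)) (P (x j))`, which a second relaxed triangle inequality, through `y`,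
bounds by `ρ (ε (P (x i)) y + ε (P (x j)) y)`. Average over the cluster of `i`, and
divide by `cost(X, C)`, which is at least `L / α`: projecting `C` yields a competitor of no greater
cost for the local problem. For squared Euclidean distances `ρ = 2`.
-/

open Finset

section Clustering

/-- A dissimilarity satisfying the triangle inequality up to the factor `ρ`: a metric for `ρ = 1`,
the square of a metric for `ρ = 2`. It need not vanish on the diagonal. -/
structure IsRelaxedMetric {E : Type*} (ρ : ℝ) (δ : E → E → ℝ) : Prop where
  nonneg : ∀ u v, 0 ≤ δ u v
  symm : ∀ u v, δ u v = δ v u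
  triangle : ∀ u v w, δ u w ≤ ρ * (δ u v + δ v w)

/-- The dissimilarity `d(p, C)` between the point `p` and the closest member of the family `C` of
centers, equal to `0` for the empty family. -/
noncomputable def nearestCost {E κ : Type*} (δ : E → E → ℝ) (C : κ → E) (p : E) : ℝ :=
  ⨅ l, δ p (C l)

/-- The objective `cost(X, C)` of center-based clustering: k-means for squared Euclidean distances,
k-medians for a metric. -/
noncomputable def clusteringCost {E ι κ : Type*} [Fintype ι] (δ : E → E → ℝ) (C : κ → E)
    (x : ι → E) : ℝ :=
  ∑ i, nearestCost δ C (x i)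

/-- `c` is an `α`-approximate solution of the clustering problem for `x`, among families of centers
with the same index type (so that `κ = Fin k` allows up to `k` distinct centers). -/
def IsApproxClustering {E ι κ : Type*} [Fintype ι] (δ : E → E → ℝ) (α : ℝ) (c : κ → E)
    (x : ι → E) : Prop :=
  ∀ C : κ → E, clusteringCost δ c x ≤ α * clusteringCost δ C x

variable {E F ι κ κ' : Type*} {δ : E → E → ℝ} {ε : F → F → ℝ} {ρ τ α : ℝ} {P : E → F}

theorem nearestCost_le [Finite κ] (δ : E → E → ℝ) (C : κ → E) (p : E) (l : κ) :
    nearestCost δ C p ≤ δ p (C l) :=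
  ciInf_le (Set.finite_range _).bddBelow l

theorem nearestCost_eq_of_forall_le [Finite κ] {C : κ → E} {p : E} {l : κ}
    (hl : ∀ l', δ p (C l) ≤ δ p (C l')) : nearestCost δ C p = δ p (C l) :=
  have : Nonempty κ := ⟨l⟩
  le_antisymm (nearestCost_le δ C p l) (le_ciInf hl)

theorem inf'_eq_nearestCost (δ : E → E → ℝ) (C : Finset E) (hC : C.Nonempty) (p : E) :
    C.inf' hC (δ p) = nearestCost δ ((↑) : C → E) p := by
  rw [inf'_eq_csInf_image, sInf_image']
  rfl

theorem nearestCost_comp_le [Finite κ] [Nonempty κ'] {s : κ → κ'} (hs : s.Surjective)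
    (hP : ∀ u v, ε (P u) (P v) ≤ δ u v) (C : κ' → E) (p : E) :
    nearestCost ε (P ∘ C ∘ s) (P p) ≤ nearestCost δ C p := by
  refine le_ciInf fun m ↦ ?_
  obtain ⟨l, rfl⟩ := hs m
  exact (nearestCost_le ε (P ∘ C ∘ s) (P p) l).trans (hP p (C (s l)))

theorem IsApproxClustering.clusteringCost_le [Fintype ι] [Fintype κ] [Fintype κ'] [Nonempty κ']
    {c : κ → F} {x : ι → E} (hc : IsApproxClustering ε α c (P ∘ x)) (hα : 0 ≤ α)
    (hP : ∀ u v, ε (P u) (P v) ≤ δ u v) (hcard : Fintype.card κ' ≤ Fintype.card κ) (C : κ' → E) :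
    clusteringCost ε c (P ∘ x) ≤ α * clusteringCost δ C x := by
  obtain ⟨e⟩ := Function.Embedding.nonempty_of_card_le hcard
  have hs : (Function.invFun e).Surjective := Function.invFun_surjective e.injective
  calc clusteringCost ε c (P ∘ x)
      ≤ α * clusteringCost ε (P ∘ C ∘ Function.invFun e) (P ∘ x) := hc _
    _ ≤ α * clusteringCost δ C x :=
        mul_le_mul_of_nonneg_left (sum_le_sum fun i _ ↦ nearestCost_comp_le hs hP C (x i)) hα

namespace IsRelaxedMetric

theorem nearestCost_nonneg (hδ : IsRelaxedMetric ρ δ) (C : κ → E) (p : E) :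
    0 ≤ nearestCost δ C p :=
  Real.iInf_nonneg fun l ↦ hδ.nonneg p (C l)

theorem sum_nearestCost_le_clusteringCost [Fintype ι] (hδ : IsRelaxedMetric ρ δ) (C : κ → E)
    (x : ι → E) (B : Finset ι) : ∑ j ∈ B, nearestCost δ C (x j) ≤ clusteringCost δ C x :=
  sum_le_univ_sum_of_nonneg fun j ↦ hδ.nearestCost_nonneg C (x j)

theorem nearestCost_le_mul_add [Finite κ] [Nonempty κ] (hδ : IsRelaxedMetric ρ δ) (C : κ → E)
    (p q : E) : nearestCost δ C p ≤ ρ * (δ p q + nearestCost δ C q) := by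
  obtain ⟨l, hl⟩ : ∃ l, δ q (C l) = nearestCost δ C q := exists_eq_ciInf_of_finite
  rw [← hl]
  exact (nearestCost_le δ C p l).trans (hδ.triangle p q (C l))

theorem nearestCost_le_of_le_mul [Finite κ] [Nonempty κ] (hδ : IsRelaxedMetric ρ δ)
    (hε : IsRelaxedMetric ρ ε) (hρ : 0 ≤ ρ) (hτ : 0 ≤ τ) (C : κ → E) {p q : E}
    (hpq : δ p q ≤ τ * ε (P p) (P q)) (y : F) :
    nearestCost δ C p ≤
      ρ ^ 2 * τ * (ε (P p) y + ε (P q) y) + ρ * nearestCost δ C q := by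
  have hlocal : ε (P p) (P q) ≤ ρ * (ε (P p) y + ε (P q) y) := by
    simpa only [hε.symm y] using hε.triangle (P p) y (P q)
  calc nearestCost δ C p
      ≤ ρ * (δ p q + nearestCost δ C q) := hδ.nearestCost_le_mul_add C p q
    _ ≤ ρ * (τ * (ρ * (ε (P p) y + ε (P q) y)) + nearestCost δ C q) := by
        gcongr
        exact hpq.trans (by gcongr)
    _ = ρ ^ 2 * τ * (ε (P p) y + ε (P q) y) + ρ * nearestCost δ C q := by ring

theorem nearestCost_le_average [Finite κ] [Nonempty κ] (hδ : IsRelaxedMetric ρ δ)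
    (hε : IsRelaxedMetric ρ ε) (hρ : 0 ≤ ρ) (hτ : 0 ≤ τ) (C : κ → E) {p : E} {x : ι → E}
    {B : Finset ι} (hB : B.Nonempty) (hp : ∀ j ∈ B, δ p (x j) ≤ τ * ε (P p) (P (x j))) (y : F) :
    nearestCost δ C p ≤
      ρ ^ 2 * τ * (ε (P p) y + (∑ j ∈ B, ε (P (x j)) y) / #B) +
        ρ * ((∑ j ∈ B, nearestCost δ C (x j)) / #B) := by
  have hcard : (0 : ℝ) < #B := by exact_mod_cast hB.card_pos
  have hsum : #B * nearestCost δ C p ≤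
      ρ ^ 2 * τ * (#B * ε (P p) y + ∑ j ∈ B, ε (P (x j)) y) +
        ρ * ∑ j ∈ B, nearestCost δ C (x j) := by
    simpa only [sum_add_distrib, ← mul_sum, sum_const, nsmul_eq_mul] using
      sum_le_sum fun j hj ↦ hδ.nearestCost_le_of_le_mul hε hρ hτ C (hp j hj) y
  refine le_of_mul_le_mul_left (hsum.trans_eq ?_) hcard
  field_simp

end IsRelaxedMetric

theorem kmeans_sensitivity_local_bound_general [Fintype ι] [Fintype κ] [DecidableEq κ] [Fintype κ']
    [Nonempty κ'] (hδ : IsRelaxedMetric ρ δ) (hε : IsRelaxedMetric ρ ε) (hρ : 0 ≤ ρ)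
    (hP : ∀ u v, ε (P u) (P v) ≤ δ u v) {x : ι → E} (hτ : 0 ≤ τ)
    (hx : ∀ i j, δ (x i) (x j) ≤ τ * ε (P (x i)) (P (x j))) (hα : 0 ≤ α) {c : κ → F}
    (hc : IsApproxClustering ε α c (P ∘ x)) (hpos : 0 < clusteringCost ε c (P ∘ x)) {π : ι → κ}
    (hπ : ∀ i l, ε (P (x i)) (c (π i)) ≤ ε (P (x i)) (c l))
    (hcard : Fintype.card κ' ≤ Fintype.card κ) (C : κ' → E) (i : ι) :
    nearestCost δ C (x i) / clusteringCost δ C x ≤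
      ρ ^ 2 * α * τ * nearestCost ε c (P (x i)) / clusteringCost ε c (P ∘ x) +
        ρ ^ 2 * α * τ * (∑ j with π j = π i, nearestCost ε c (P (x j))) /
          (#{j | π j = π i} * clusteringCost ε c (P ∘ x)) +
        ρ / #{j | π j = π i} := by
  set K := clusteringCost δ C x
  set L := clusteringCost ε c (P ∘ x)
  set B : Finset ι := {j | π j = π i}
  set S := ∑ j ∈ B, nearestCost ε c (P (x j))
  have hLK : L ≤ α * K := hc.clusteringCost_le hα hP hcard C
  have hK : 0 < K := pos_of_mul_pos_right (hpos.trans_le hLK) hα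
  have hinv : 1 / K ≤ α / L := by rwa [div_le_div_iff₀ hK hpos, one_mul]
  have hsum : ∑ j ∈ B, ε (P (x j)) (c (π i)) = S := sum_congr rfl fun j hj ↦ by
    rw [nearestCost_eq_of_forall_le (hπ j), (mem_filter.mp hj).2]
  have hS_nonneg : 0 ≤ S := sum_nonneg fun j _ ↦ hε.nearestCost_nonneg c (P (x j))
  have hi_nonneg := hε.nearestCost_nonneg c (P (x i))
  have hB : B.Nonempty := ⟨i, by simp [B]⟩
  have haverage : nearestCost δ C (x i) ≤
      ρ ^ 2 * τ * (nearestCost ε c (P (x i)) + S / #B) + ρ * (K / #B) := by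
    rw [nearestCost_eq_of_forall_le (hπ i), ← hsum]
    refine (hδ.nearestCost_le_average hε hρ hτ C hB (fun j _ ↦ hx i j) (c (π i))).trans ?_
    gcongr
    exact hδ.sum_nearestCost_le_clusteringCost C x B
  calc nearestCost δ C (x i) / K
      ≤ (ρ ^ 2 * τ * (nearestCost ε c (P (x i)) + S / #B) + ρ * (K / #B)) / K := by gcongr
    _ = ρ ^ 2 * τ * (nearestCost ε c (P (x i)) + S / #B) * (1 / K) + ρ / #B := by field_simp
    _ ≤ ρ ^ 2 * τ * (nearestCost ε c (P (x i)) + S / #B) * (α / L) + ρ / #B := by gcongr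
    _ = _ := by field_simp

end Clustering

section SqEuclidean

/-- The squared Euclidean distance on coordinate vectors, whose type carries the sup metric in
Mathlib. -/
def sqEuclideanDist {ι : Type*} [Fintype ι] (u v : ι → ℝ) : ℝ :=
  ∑ m, (u m - v m) ^ 2

variable {ι κ : Type*} [Fintype ι] [Fintype κ]

theorem isRelaxedMetric_sqEuclideanDist :
    IsRelaxedMetric 2 (sqEuclideanDist : (ι → ℝ) → (ι → ℝ) → ℝ) where
  nonneg u v := sum_nonneg fun m _ ↦ sq_nonneg (u m - v m)
  symm u v := sum_congr rfl fun m _ ↦ sub_sq_comm (u m) (v m)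
  triangle u v w := by
    simp only [sqEuclideanDist, ← sum_add_distrib, mul_sum]
    refine sum_le_sum fun m _ ↦ ?_
    simpa only [sub_add_sub_cancel] using add_sq_le (a := u m - v m) (b := v m - w m)

theorem sqEuclideanDist_comp_le {f : κ → ι} (hf : f.Injective) (u v : ι → ℝ) :
    sqEuclideanDist (u ∘ f) (v ∘ f) ≤ sqEuclideanDist u v :=
  calc sqEuclideanDist (u ∘ f) (v ∘ f)
      = ∑ m ∈ univ.map ⟨f, hf⟩, (u m - v m) ^ 2 := by simp [sqEuclideanDist]
    _ ≤ sqEuclideanDist u v := sum_le_univ_sum_of_nonneg fun m ↦ sq_nonneg (u m - v m)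

end SqEuclidean

/-- upper bounding the global k-means sensitivity of point `i` by quantities
computable from the local data of one party: if the party's coordinates (image of `emb`)
determine squared distances up to factor `τ ≥ 1`, and `C̃^{(t)} = {c̃_l}` is a local
`α`-approximate solution with local cost `L > 0`, local clusters `B_l` given by the closest
center map `π`, then for every `k`-center set `C` with positive cost,
`d(x_i,C)²/cost(X,C) ≤ 4ατ d(Px_i,C̃^{(t)})²/L
  + 4ατ (Σ_{j∈B_{π(i)}} d(Px_j,C̃^{(t)})²)/(|B_{π(i)}| L) + 8ατ/|B_{π(i)}|`. -/
theorem kmeans_sensitivity_local_bound (n d dt k : ℕ) (hn : 0 < n) (hk : 0 < k)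
    (x : Fin n → Fin d → ℝ)
    (emb : Fin dt → Fin d) (hemb : Function.Injective emb)
    (τ : ℝ) (hτ : 1 ≤ τ)
    (hproj : ∀ i j, (∑ m, (x i m - x j m) ^ 2) ≤ τ * ∑ a, (x i (emb a) - x j (emb a)) ^ 2)
    (α : ℝ) (hα : 1 ≤ α) (hατ : 1 ≤ α * τ)
    (ctil : Fin k → Fin dt → ℝ)
    (happrox : ∀ C' : Fin k → Fin dt → ℝ,
      (∑ i, ⨅ l, ∑ a, (x i (emb a) - ctil l a) ^ 2) ≤
        α * ∑ i, ⨅ l, ∑ a, (x i (emb a) - C' l a) ^ 2)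
    (π : Fin n → Fin k)
    (hπ : ∀ i l, (∑ a, (x i (emb a) - ctil (π i) a) ^ 2) ≤
      ∑ a, (x i (emb a) - ctil l a) ^ 2)
    (B : Fin k → Finset (Fin n)) (hB : ∀ l, B l = Finset.univ.filter fun i => π i = l)
    (L : ℝ) (hL : L = ∑ i, ⨅ l, ∑ a, (x i (emb a) - ctil l a) ^ 2) (hLpos : 0 < L) :
    ∀ (i : Fin n) (C : Finset (Fin d → ℝ)) (hC : C.Nonempty), C.card = k →
      0 < (∑ i', C.inf' hC fun c => ∑ m, (x i' m - c m) ^ 2) →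
      (C.inf' hC fun c => ∑ m, (x i m - c m) ^ 2) /
          (∑ i', C.inf' hC fun c => ∑ m, (x i' m - c m) ^ 2) ≤
        4 * α * τ * (⨅ l, ∑ a, (x i (emb a) - ctil l a) ^ 2) / L
          + 4 * α * τ * (∑ j ∈ B (π i), ⨅ l, ∑ a, (x j (emb a) - ctil l a) ^ 2) /
              (((B (π i)).card : ℝ) * L)
          + 8 * α * τ / ((B (π i)).card : ℝ) := by
  intro i C hC hcard _
  subst hL
  obtain rfl := funext hB
  have : Nonempty C := hC.to_subtype
  have hbound := kmeans_sensitivity_local_bound_general isRelaxedMetric_sqEuclideanDist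
    isRelaxedMetric_sqEuclideanDist zero_le_two (sqEuclideanDist_comp_le hemb)
    (zero_le_one.trans hτ) hproj (zero_le_one.trans hα) happrox hLpos hπ
    (by simp [hcard]) ((↑) : C → Fin d → ℝ) i
  simp only [clusteringCost, ← inf'_eq_nearestCost _ C hC,
    (by norm_num : (2 : ℝ) ^ 2 = 4)] at hbound
  refine hbound.trans (add_le_add le_rfl ?_)
  gcongr
  linarith
end
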